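/- Suppose ν satisfies the Carleman condition, F ∈ S[x]^p and G ∈ S[x,y]^q are homogeneous in x of even degree, and F(x) ≻ 0 for all x ∈ X \ {0} where X = {x : G(x,y) ⪰ 0 ∀ y ∈ Y}. Then there exist N ∈ ℕ and SOS matrices Σ₀ ∈ S[x]^p, Σ ∈ S[x,y]^{pq}, homogeneous in x with deg Σ₀ = 2N + deg F and deg_x Σ = 2N + deg F − deg_x G, such that ‖x‖^{2N} F(x) = Σ₀(x) + ∫_Y ⟨Σ(x,y), G(x,y)⟩_p dν(y). -/

import Mathlib

open MeasureTheory MvPolynomial Matrix Finset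

noncomputable section

/-- A polynomial matrix is an SOS matrix if it factors as `Tᵀ * T`. -/
def IsSOSMatrix {σ : Type*} {ι : Type*} [Fintype ι]
    (M : Matrix ι ι (MvPolynomial σ ℝ)) : Prop :=
  ∃ (l : ℕ) (T : Matrix (Fin l) ι (MvPolynomial σ ℝ)), M = Tᵀ * T

/-- A polynomial is a sum of squares. -/
def IsSOSPoly {σ : Type*} (f : MvPolynomial σ ℝ) : Prop :=
  ∃ (l : ℕ) (g : Fin l → MvPolynomial σ ℝ), f = ∑ i, (g i) ^ 2

/-- The block-trace bilinear map `⟨A,B⟩_p = Tr_p (Aᵀ (I_p ⊗ B))`. -/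
def lram {R : Type*} [CommSemiring R] {ιp ιq : Type*} [Fintype ιq]
    (A : Matrix (ιp × ιq) (ιp × ιq) R) (B : Matrix ιq ιq R) :
    Matrix ιp ιp R :=
  Matrix.of fun i j => ∑ a : ιq, ∑ c : ιq, A (j, c) (i, a) * B c a

/-- The `x`-part of an exponent in the variables `x ⊕ y`. -/
def xPart {n m : ℕ} (d : (Fin n ⊕ Fin m) →₀ ℕ) : Fin n →₀ ℕ :=
  Finsupp.comapDomain Sum.inl d Sum.inl_injective.injOn

/-- Integrate out the `y`-variables of a polynomial in `(x, y)` against the measure `ν`: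
`∫_Y Σ_β H_β(x) y^β dν := Σ_β H_β(x) ∫_Y y^β dν`. -/
def integY {n m : ℕ} (ν : Measure (Fin m → ℝ))
    (q : MvPolynomial (Fin n ⊕ Fin m) ℝ) : MvPolynomial (Fin n) ℝ :=
  ∑ d ∈ q.support, MvPolynomial.monomial (xPart d)
    (q.coeff d * ∫ y, ∏ j : Fin m, (y j) ^ (d (Sum.inr j)) ∂ν)

/-- All polynomial moments of `ν` are finite. -/
def momentsFinite {m : ℕ} (ν : Measure (Fin m → ℝ)) : Prop :=
  ∀ h : MvPolynomial (Fin m) ℝ, Integrable (fun y => |MvPolynomial.eval y h|) ν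

/-- `ν` has support exactly `Y`. -/
def hasSupport {m : ℕ} (ν : Measure (Fin m → ℝ)) (Y : Set (Fin m → ℝ)) : Prop :=
  ν Yᶜ = 0 ∧ ∀ U : Set (Fin m → ℝ), IsOpen U → (U ∩ Y).Nonempty → 0 < ν U

/-- The multivariate Carleman condition on `ν`. -/
def Carleman {m : ℕ} (ν : Measure (Fin m → ℝ)) : Prop :=
  ∀ j : Fin m, ¬ Summable (fun d : ℕ =>
    (∫ y, (y j) ^ (2 * (d + 1)) ∂ν) ^ (-(1 : ℝ) / (2 * (d + 1))))

/-- Evaluate a polynomial matrix at a point. -/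
def evalMat {σ : Type*} {ι : Type*} (x : σ → ℝ)
    (M : Matrix ι ι (MvPolynomial σ ℝ)) : Matrix ι ι ℝ :=
  M.map (MvPolynomial.eval x)

/-- The spectral (L²-operator) norm of a real matrix. -/
def specNorm {ι : Type*} [Fintype ι] [DecidableEq ι] (A : Matrix ι ι ℝ) : ℝ :=
  ‖(Matrix.toEuclideanLin A).toContinuousLinearMap‖

/-- Degree of a polynomial matrix. -/
def matDeg {ι σ : Type*} [Fintype ι] (M : Matrix ι ι (MvPolynomial σ ℝ)) : ℕ :=
  Finset.univ.sup fun i => Finset.univ.sup fun j => (M i j).totalDegree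

/-- Degree in `x` of a polynomial in `(x,y)`. -/
def degX {n m : ℕ} (q : MvPolynomial (Fin n ⊕ Fin m) ℝ) : ℕ :=
  q.support.sup fun d => ∑ i : Fin n, d (Sum.inl i)

/-- Degree in `y` of a polynomial in `(x,y)`. -/
def degY {n m : ℕ} (q : MvPolynomial (Fin n ⊕ Fin m) ℝ) : ℕ :=
  q.support.sup fun d => ∑ j : Fin m, d (Sum.inr j)

def matDegX {ι : Type*} {n m : ℕ} [Fintype ι]
    (M : Matrix ι ι (MvPolynomial (Fin n ⊕ Fin m) ℝ)) : ℕ :=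
  Finset.univ.sup fun i => Finset.univ.sup fun j => degX (M i j)

def matDegY {ι : Type*} {n m : ℕ} [Fintype ι]
    (M : Matrix ι ι (MvPolynomial (Fin n ⊕ Fin m) ℝ)) : ℕ :=
  Finset.univ.sup fun i => Finset.univ.sup fun j => degY (M i j)

/-- Homogeneity in `x` of a polynomial in `(x,y)`. -/
def IsHomogeneousX {n m : ℕ} (q : MvPolynomial (Fin n ⊕ Fin m) ℝ) (k : ℕ) : Prop :=
  ∀ d ∈ q.support, ∑ i : Fin n, d (Sum.inl i) = k

/-- Positive semidefiniteness of the full (infinite) moment matrix `M(S)`: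
every finite principal block submatrix is PSD. -/
def MomentPSD {n p : ℕ} (S : (Fin n →₀ ℕ) → Matrix (Fin p) (Fin p) ℝ) : Prop :=
  ∀ (N : ℕ) (idx : Fin N → (Fin n →₀ ℕ)),
    (Matrix.of fun a b : Fin N × Fin p => S (idx a.1 + idx b.1) a.2 b.2).PosSemidef

/-- Exponents of degree at most `d` in `n` variables. -/
def Expo (n d : ℕ) := {a : Fin n → Fin (d + 1) // ∑ i, (a i : ℕ) ≤ d}

instance (n d : ℕ) : Fintype (Expo n d) := by unfold Expo; infer_instance
instance (n d : ℕ) : DecidableEq (Expo n d) := by unfold Expo; infer_instance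

def expF {n d : ℕ} (a : Fin n → Fin (d + 1)) : Fin n →₀ ℕ :=
  Finsupp.equivFunOnFinite.symm (fun i => (a i : ℕ))

/-- Truncated moment matrix `M_d(S)`. -/
def momentMat {n p : ℕ} (S : (Fin n →₀ ℕ) → Matrix (Fin p) (Fin p) ℝ) (d : ℕ) :
    Matrix (Expo n d × Fin p) (Expo n d × Fin p) ℝ :=
  Matrix.of fun a b => S (expF a.1.1 + expF b.1.1) a.2 b.2

/-- Truncated localizing matrix `M^ν_{d,k}(G S)`. -/
def locMat {n m p q : ℕ} (ν : Measure (Fin m → ℝ))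
    (G : Matrix (Fin q) (Fin q) (MvPolynomial (Fin n ⊕ Fin m) ℝ))
    (S : (Fin n →₀ ℕ) → Matrix (Fin p) (Fin p) ℝ) (d k : ℕ) :
    Matrix ((Expo n d × Expo m k) × (Fin p × Fin q))
           ((Expo n d × Expo m k) × (Fin p × Fin q)) ℝ :=
  Matrix.of fun r c =>
    ∑ e ∈ (G r.2.2 c.2.2).support,
      (∫ y, ∏ j : Fin m, (y j) ^ (e (Sum.inr j) + (r.1.2.1 j : ℕ) + (c.1.2.1 j : ℕ)) ∂ν) *
      ((G r.2.2 c.2.2).coeff e *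
        S (expF r.1.1.1 + expF c.1.1.1 + xPart e) r.2.1 c.2.1)

/-- The Riesz functional `L_S(H) = Σ_α tr(H_α S_α)`. -/
def RieszL {n p : ℕ} (S : (Fin n →₀ ℕ) → Matrix (Fin p) (Fin p) ℝ)
    (H : Matrix (Fin p) (Fin p) (MvPolynomial (Fin n) ℝ)) : ℝ :=
  ∑ i, ∑ j, ∑ α ∈ (H i j).support, (H i j).coeff α * S α j i

end

/-!
On the compact set of unit vectors where `F` is not positive definite, some `G(x, y)` with
`y ∈ supp ν` fails to be positive semidefinite. The Carleman condition makes the polynomials dense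
in `L²((1 + g²) dν)` for every polynomial `g`, so that a negative value of `g` on `supp ν` is
detected by an integral `∫ h² g dν`; by compactness, finitely many forms
`g_k(x) = ∫ u_k(y)ᵀ G(x, y) u_k(y) dν(y)`, scaled to `|g_k| ≤ 1` on the sphere, have the property
that `F` is positive definite wherever all `g_k` are nonnegative. Then
`F - ∑ g_k (1 - g_k)^(2s) I` is positive definite on the sphere for large `s`. Homogenized by powers
of `‖x‖²`, it becomes a sum of squares after multiplication by a further power of `‖x‖²`, by
Reznick's theorem, which follows from Pólya's theorem in the variables `(x_i ± x_j)²`.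
-/

/-! ### Quasi-analyticity -/

section Quasianalytic

variable {E : Type*} [NormedAddCommGroup E] [NormedSpace ℝ E]

theorem norm_le_mul_exp_of_norm_deriv_le {f f' : ℝ → E} {A c x : ℝ}
    (hf : ∀ t, HasDerivAt f (f' t) t) (hx : ‖f x‖ ≤ A)
    (hf' : ∀ t, x ≤ t → ‖f' t‖ ≤ A * (Real.exp (c * (t - x)) * c)) {t : ℝ} (ht : x ≤ t) :
    ‖f t‖ ≤ A * Real.exp (c * (t - x)) := by
  have hexp (u : ℝ) : HasDerivAt (fun u ↦ A * Real.exp (c * (u - x)))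
      (A * (Real.exp (c * (u - x)) * c)) u := by
    have hlin : HasDerivAt (fun u ↦ c * (u - x)) c u := by
      simpa using ((hasDerivAt_id u).sub_const x).const_mul c
    exact hlin.exp.const_mul A
  exact image_norm_le_of_norm_deriv_right_le_deriv_boundary
    (fun u _ ↦ (hf u).continuousAt.continuousWithinAt) (fun u _ ↦ (hf u).hasDerivWithinAt)
    (by simpa using hx) hexp (fun u hu ↦ hf' u hu.1) ⟨ht, le_rfl⟩

variable {f : ℕ → ℝ → E} {M : ℕ → ℝ} (hf : ∀ k t, HasDerivAt (f k) (f (k + 1) t) t)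
  (hM : ∀ k, 0 < M k) (hratio : Monotone fun k ↦ M (k + 1) / M k)

include hf hM hratio

theorem norm_le_mul_exp_of_monotone_ratio {δ x : ℝ} {N : ℕ} (hδ : 0 ≤ δ)
    (hx : ∀ n ≤ N, ‖f n x‖ ≤ δ * M n) (htop : ∀ t, ‖f (N + 1) t‖ ≤ δ * M (N + 1))
    {n : ℕ} (hn : n ≤ N) {t : ℝ} (ht : x ≤ t) :
    ‖f n t‖ ≤ δ * M n * Real.exp (M (N + 1) / M N * (t - x)) := by
  set r := M (N + 1) / M N
  have hM_succ {k : ℕ} (hk : k ≤ N) : M (k + 1) ≤ r * M k := (div_le_iff₀ (hM k)).1 (hratio hk)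
  have hr : 0 < r := div_pos (hM _) (hM _)
  induction hn using Nat.decreasingInduction generalizing t with
  | self =>
    refine norm_le_mul_exp_of_norm_deriv_le (hf N) (hx N le_rfl) (fun u hu ↦ ?_) ht
    have hone : 1 ≤ Real.exp (r * (u - x)) :=
      Real.one_le_exp (mul_nonneg hr.le (sub_nonneg.2 hu))
    calc ‖f (N + 1) u‖ ≤ δ * (r * M N) * 1 := by
          rw [mul_one]
          exact (htop u).trans (mul_le_mul_of_nonneg_left (hM_succ le_rfl) hδ)
      _ ≤ δ * (r * M N) * Real.exp (r * (u - x)) :=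
          mul_le_mul_of_nonneg_left hone (mul_nonneg hδ (mul_pos hr (hM N)).le)
      _ = _ := by ring
  | of_succ k hk ih =>
    refine norm_le_mul_exp_of_norm_deriv_le (hf k) (hx k hk.le) (fun u hu ↦ ?_) ht
    calc ‖f (k + 1) u‖ ≤ δ * M (k + 1) * Real.exp (r * (u - x)) := ih hu
      _ ≤ δ * (r * M k) * Real.exp (r * (u - x)) := by gcongr; exact hM_succ hk.le
      _ = _ := by ring

theorem norm_le_exp_neg_mul_of_le_sum (hb : ∀ k t, ‖f k t‖ ≤ Real.exp (-k) * M k)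
    (h0 : ∀ k, f k 0 = 0) (L : ℕ) {N n : ℕ} {x : ℝ} (hx0 : 0 ≤ x)
    (hx : x ≤ ∑ j ∈ range L, M (N + j) / M (N + j + 1)) (hn : n ≤ N) :
    ‖f n x‖ ≤ Real.exp (-N) * M n := by
  have hpos (k : ℕ) : 0 < M k / M (k + 1) := div_pos (hM _) (hM _)
  induction L generalizing N n x with
  | zero =>
    obtain rfl : x = 0 := le_antisymm (by simpa using hx) hx0
    simpa [h0] using mul_nonneg (Real.exp_pos (-N)).le (hM n).le
  | succ L ih =>
    set s := ∑ j ∈ range L, M (N + 1 + j) / M (N + 1 + j + 1) with hs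
    have hxs : x ≤ s + M N / M (N + 1) := by
      rw [sum_range_succ', add_zero] at hx
      simpa only [hs, add_right_comm N 1, ← add_assoc] using hx
    have hstep : M (N + 1) / M N * (x - min x s) ≤ 1 := by
      rw [← inv_div, inv_mul_le_iff₀ (hpos N), mul_one, sub_le_iff_le_add', ← min_add_add_right]
      exact le_min (le_add_of_nonneg_right (hpos N).le) hxs
    have hs0 : 0 ≤ s := sum_nonneg fun j _ ↦ (hpos _).le
    calc ‖f n x‖
        ≤ Real.exp (-(N + 1 : ℕ)) * M n * Real.exp (M (N + 1) / M N * (x - min x s)) :=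
          norm_le_mul_exp_of_monotone_ratio hf hM hratio (Real.exp_pos _).le
            (fun k hk ↦ ih (le_min hx0 hs0) (min_le_right _ _) (hk.trans (Nat.le_succ N)))
            (hb (N + 1)) hn (min_le_left _ _)
      _ ≤ Real.exp (-(N + 1 : ℕ)) * M n * Real.exp 1 := by have := hM n; gcongr
      _ = Real.exp (-N) * M n := by
          rw [mul_right_comm, ← Real.exp_add]; congr 2; push_cast; ring

theorem eq_zero_of_quasianalytic_of_nonneg (hb : ∀ k t, ‖f k t‖ ≤ Real.exp (-k) * M k)
    (h0 : ∀ k, f k 0 = 0) (hdiv : ¬ Summable fun k ↦ M k / M (k + 1)) {t : ℝ} (ht : 0 ≤ t) :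
    f 0 t = 0 := by
  have hbound (N : ℕ) : ‖f 0 t‖ ≤ Real.exp (-N) * M 0 := by
    have hdivN : ¬ Summable fun j ↦ M (N + j) / M (N + j + 1) := fun h ↦
      hdiv ((summable_nat_add_iff N).1 (by simpa only [add_comm _ N] using h))
    obtain ⟨L, hL⟩ := ((not_summable_iff_tendsto_nat_atTop_of_nonneg fun j ↦
      (div_pos (hM (N + j)) (hM _)).le).1 hdivN |>.eventually_ge_atTop t).exists
    exact norm_le_exp_neg_mul_of_le_sum hf hM hratio hb h0 L ht hL N.zero_le
  have hlim : Filter.Tendsto (fun N : ℕ ↦ Real.exp (-N) * M 0) Filter.atTop (nhds 0) := by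
    simpa using (Real.tendsto_exp_neg_atTop_nhds_zero.comp tendsto_natCast_atTop_atTop).mul_const
      (M 0)
  exact norm_le_zero_iff.1 (ge_of_tendsto' hlim hbound)

/-- The Denjoy–Carleman theorem, by Bang's argument: a zero of infinite order propagates by
a distance at least `e⁻¹ * (M k / M (k + 1))` for every `k`. -/
theorem eq_zero_of_quasianalytic (hb : ∀ k t, ‖f k t‖ ≤ M k) (h0 : ∀ k, f k 0 = 0)
    (hdiv : ¬ Summable fun k ↦ M k / M (k + 1)) (t : ℝ) : f 0 t = 0 := by
  have he : 0 < Real.exp 1 := Real.exp_pos 1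
  have hM' (k : ℕ) : 0 < Real.exp k * M k := mul_pos (Real.exp_pos _) (hM k)
  have hexp (k : ℕ) : Real.exp ((k + 1 : ℕ) : ℝ) = Real.exp 1 * Real.exp k := by
    rw [← Real.exp_add]; congr 1; push_cast; ring
  have hratio' : Monotone fun k : ℕ ↦ Real.exp (k + 1 : ℕ) * M (k + 1) / (Real.exp k * M k) := by
    convert hratio.const_mul he.le using 2 with k
    rw [hexp]; field_simp
  have hdiv' : ¬ Summable fun k : ℕ ↦ Real.exp k * M k / (Real.exp (k + 1 : ℕ) * M (k + 1)) := by
    rw [← summable_mul_left_iff (inv_ne_zero he.ne')] at hdiv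
    simpa only [hexp, mul_assoc, mul_div_mul_left _ _ (Real.exp_pos _).ne',
      mul_left_comm (Real.exp 1), inv_mul_eq_div, div_div, mul_comm (M _) (Real.exp 1)] using hdiv
  have hb' (k : ℕ) (t : ℝ) : ‖f k t‖ ≤ Real.exp (-k) * (Real.exp k * M k) := by
    rw [← mul_assoc, ← Real.exp_add, neg_add_cancel, Real.exp_zero, one_mul]; exact hb k t
  rcases le_total 0 t with ht | ht
  · exact eq_zero_of_quasianalytic_of_nonneg hf hM' hratio' hb' h0 hdiv' ht
  · have hreflect (k : ℕ) (u : ℝ) : HasDerivAt (fun u ↦ (-1 : ℝ) ^ k • f k (-u))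
        ((-1 : ℝ) ^ (k + 1) • f (k + 1) (-u)) u := by
      rw [pow_succ, mul_smul]
      exact ((hf k (-u)).scomp u (hasDerivAt_neg u)).const_smul ((-1 : ℝ) ^ k)
    simpa using eq_zero_of_quasianalytic_of_nonneg hreflect hM' hratio'
      (fun k u ↦ by simpa [norm_smul] using hb' k (-u)) (fun k ↦ by simp [h0]) hdiv'
      (neg_nonneg.2 ht)

end Quasianalytic

/-! ### Carleman's inequality and log-convex sequences -/

section LogConvex

theorem div_exp_le_factorial_rpow (n : ℕ) :
    (n + 1 : ℝ) / Real.exp 1 ≤ ((n + 1).factorial : ℝ) ^ ((n + 1 : ℝ)⁻¹) := by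
  have hpow : ((n + 1 : ℝ) / Real.exp 1) ^ (n + 1) ≤ (n + 1).factorial := by
    have h := Real.pow_div_factorial_le_exp (n + 1 : ℝ) (by positivity) (n + 1)
    rw [div_le_iff₀ (by positivity)] at h
    rwa [div_pow, div_le_iff₀ (by positivity), ← Real.exp_nat_mul, mul_one, mul_comm,
      Nat.cast_add_one]
  calc (n + 1 : ℝ) / Real.exp 1
      = (((n + 1 : ℝ) / Real.exp 1) ^ (n + 1)) ^ ((n + 1 : ℝ)⁻¹) := by
        rw [← Nat.cast_add_one, Real.pow_rpow_inv_natCast (by positivity) n.succ_ne_zero]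
    _ ≤ _ := Real.rpow_le_rpow (by positivity) hpow (by positivity)

/-- The weights `j + 1` make the arithmetic-geometric mean inequality summable in `n`. -/
theorem prod_rpow_le_sum_div_sq {a : ℕ → ℝ} (ha : ∀ n, 0 ≤ a n) (n : ℕ) :
    (∏ j ∈ range (n + 1), a j) ^ ((n + 1 : ℝ)⁻¹) ≤
      ∑ j ∈ range (n + 1), Real.exp 1 * ((j + 1) * a j) * ((n + 1 : ℝ) ^ 2)⁻¹ := by
  have hamgm : ((n + 1).factorial : ℝ) ^ ((n + 1 : ℝ)⁻¹) *
      (∏ j ∈ range (n + 1), a j) ^ ((n + 1 : ℝ)⁻¹) ≤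
        (∑ j ∈ range (n + 1), (j + 1) * a j) / (n + 1) := by
    have h := Real.geom_mean_le_arith_mean (range (n + 1)) (fun _ ↦ 1)
      (fun j ↦ (j + 1 : ℝ) * a j) (fun _ _ ↦ zero_le_one) (sum_pos (fun _ _ ↦ one_pos) (by simp))
      (fun j _ ↦ mul_nonneg (by positivity) (ha j))
    rw [← Real.mul_rpow (by positivity) (prod_nonneg fun j _ ↦ ha j),
      ← prod_range_add_one_eq_factorial, Nat.cast_prod, ← prod_mul_distrib]
    simpa using h
  have hgeom : 0 ≤ (∏ j ∈ range (n + 1), a j) ^ ((n + 1 : ℝ)⁻¹) :=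
    Real.rpow_nonneg (prod_nonneg fun j _ ↦ ha j) _
  have h := (mul_le_mul_of_nonneg_right (div_exp_le_factorial_rpow n) hgeom).trans hamgm
  calc _ = Real.exp 1 / (n + 1) * ((n + 1) / Real.exp 1 *
          (∏ j ∈ range (n + 1), a j) ^ ((n + 1 : ℝ)⁻¹)) := by
        field_simp
    _ ≤ Real.exp 1 / (n + 1) * ((∑ j ∈ range (n + 1), (j + 1) * a j) / (n + 1)) := by gcongr
    _ = _ := by rw [← sum_mul, ← mul_sum]; field_simp

theorem sum_Ico_inv_add_one_sq_le (j N : ℕ) :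
    ∑ n ∈ Ico j N, ((n + 1 : ℝ) ^ 2)⁻¹ ≤ 2 / (j + 1) := by
  calc ∑ n ∈ Ico j N, ((n + 1 : ℝ) ^ 2)⁻¹ = ∑ n ∈ Ioo j (N + 1), ((n : ℝ) ^ 2)⁻¹ := by
        rw [← Ico_add_one_left_eq_Ioo, ← sum_Ico_add' _ j N 1]; push_cast; rfl
    _ ≤ _ := sum_Ioo_inv_sq_le j (N + 1)

theorem summable_prod_rpow_inv {a : ℕ → ℝ} (ha : ∀ n, 0 ≤ a n) (hs : Summable a) :
    Summable fun n : ℕ ↦ (∏ j ∈ range (n + 1), a j) ^ ((n + 1 : ℝ)⁻¹) := by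
  refine summable_of_sum_range_le (c := 2 * Real.exp 1 * ∑' j, a j)
    (fun n ↦ Real.rpow_nonneg (prod_nonneg fun j _ ↦ ha j) _) fun N ↦ ?_
  calc ∑ n ∈ range N, (∏ j ∈ range (n + 1), a j) ^ ((n + 1 : ℝ)⁻¹)
      ≤ ∑ n ∈ range N, ∑ j ∈ range (n + 1),
          Real.exp 1 * ((j + 1) * a j) * ((n + 1 : ℝ) ^ 2)⁻¹ :=
        sum_le_sum fun n _ ↦ prod_rpow_le_sum_div_sq ha n
    _ = ∑ j ∈ range N, Real.exp 1 * ((j + 1) * a j) *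
          ∑ n ∈ Ico j N, ((n + 1 : ℝ) ^ 2)⁻¹ := by
        simp only [range_eq_Ico, ← sum_Ico_Ico_comm, mul_sum]
    _ ≤ ∑ j ∈ range N, Real.exp 1 * ((j + 1) * a j) * (2 / (j + 1)) := by
        gcongr with j
        · have := ha j; positivity
        · exact sum_Ico_inv_add_one_sq_le j N
    _ = 2 * Real.exp 1 * ∑ j ∈ range N, a j := by
        rw [mul_sum]; exact sum_congr rfl fun j _ ↦ by field_simp
    _ ≤ 2 * Real.exp 1 * ∑' j, a j := by gcongr; exact hs.sum_le_tsum _ fun j _ ↦ ha j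

theorem rpow_le_max_one {a s : ℝ} (ha : 0 ≤ a) (hs : 0 ≤ s) (hs1 : s ≤ 1) : a ^ s ≤ max 1 a := by
  rcases le_total a 1 with h | h
  · exact (Real.rpow_le_one ha h hs).trans (le_max_left _ _)
  · exact (Real.rpow_le_self_of_one_le h hs1).trans (le_max_right _ _)

theorem one_div_two_mul_succ_le_one (d : ℕ) : (1 : ℝ) / (2 * (d + 1)) ≤ 1 := by
  rw [div_le_one (by positivity)]; linarith [d.cast_nonneg (α := ℝ)]

variable {m : ℕ → ℝ} (hm : ∀ k, 0 < m k)

include hm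

theorem prod_range_div_succ (n : ℕ) : ∏ j ∈ range n, m j / m (j + 1) = m 0 / m n :=
  prod_range_induction _ (fun n ↦ m 0 / m n) (div_self (hm 0).ne') n fun k _ ↦
    (div_mul_div_cancel₀ (hm k).ne').symm

theorem not_summable_sqrt_ratio
    (h : ¬ Summable fun d : ℕ ↦ m (d + 1) ^ (-(1 : ℝ) / (2 * (d + 1)))) :
    ¬ Summable fun k ↦ √(m k / m (k + 1)) := by
  refine fun hs ↦ h ?_
  have hgeom := summable_prod_rpow_inv (fun k ↦ Real.sqrt_nonneg _) hs
  refine Summable.of_nonneg_of_le (fun d ↦ Real.rpow_nonneg (hm _).le _) (fun d ↦ ?_)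
    (hgeom.mul_left (max 1 (m 0)⁻¹))
  have hprod : ∏ j ∈ range (d + 1), √(m j / m (j + 1)) = √(m 0 / m (d + 1)) := by
    rw [← Real.sqrt_prod _ fun j _ ↦ (div_pos (hm _) (hm _)).le, prod_range_div_succ hm]
  have hexp : (1 : ℝ) / 2 * (d + 1 : ℝ)⁻¹ = 1 / (2 * (d + 1)) := by field_simp
  rw [hprod, Real.sqrt_eq_rpow, ← Real.rpow_mul (div_pos (hm _) (hm _)).le, hexp]
  calc m (d + 1) ^ (-(1 : ℝ) / (2 * (d + 1)))
      = (m 0)⁻¹ ^ ((1 : ℝ) / (2 * (d + 1))) * (m 0 / m (d + 1)) ^ ((1 : ℝ) / (2 * (d + 1))) := by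
        rw [← Real.mul_rpow (inv_pos.2 (hm 0)).le (div_pos (hm _) (hm _)).le, neg_div,
          Real.rpow_neg (hm _).le, ← Real.inv_rpow (hm _).le, inv_mul_eq_div,
          div_div_cancel_left' (hm 0).ne']
    _ ≤ _ := by
        refine mul_le_mul_of_nonneg_right ?_ (Real.rpow_nonneg (div_pos (hm _) (hm _)).le _)
        exact rpow_le_max_one (inv_pos.2 (hm 0)).le (by positivity) (one_div_two_mul_succ_le_one d)

variable (hratio : Monotone fun k ↦ m (k + 1) / m k)

include hratio

theorem lyapunov_pow_succ_le (d : ℕ) : m d ^ (d + 1) ≤ m 0 * m (d + 1) ^ d := by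
  have hprod : m d / m 0 ≤ (m (d + 1) / m d) ^ d := by
    rw [← inv_div, ← prod_range_div_succ hm, ← prod_inv_distrib]
    calc ∏ j ∈ range d, (m j / m (j + 1))⁻¹ ≤ ∏ _j ∈ range d, m (d + 1) / m d :=
          prod_le_prod (fun j _ ↦ (inv_pos.2 (div_pos (hm _) (hm _))).le) fun j hj ↦ by
            rw [inv_div]; exact hratio (mem_range.1 hj).le
      _ = (m (d + 1) / m d) ^ d := by rw [prod_const, card_range]
  rw [div_pow, div_le_div_iff₀ (hm 0) (pow_pos (hm d) d)] at hprod
  rwa [pow_succ', mul_comm (m 0)]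

theorem rpow_neg_succ_le (d : ℕ) :
    m (d + 1 + 1) ^ (-(1 : ℝ) / (2 * ((d + 1 : ℕ) + 1))) ≤
      max 1 (m 0) * m (d + 1) ^ (-(1 : ℝ) / (2 * (d + 1))) := by
  set s : ℝ := 1 / (2 * ((d + 1) * (d + 1 + 1)))
  have hs : s ≤ 1 := by
    rw [div_le_one (by positivity)]; nlinarith [d.cast_nonneg (α := ℝ)]
  have hlow : m (d + 1) ^ ((1 : ℝ) / (2 * (d + 1))) = (m (d + 1) ^ (d + 1 + 1)) ^ s := by
    rw [← Real.rpow_natCast_mul (hm _).le]; congr 1; push_cast; simp only [s]; field_simp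
  have hupp : m (d + 1 + 1) ^ ((1 : ℝ) / (2 * ((d + 1 : ℕ) + 1))) =
      (m (d + 1 + 1) ^ (d + 1)) ^ s := by
    rw [← Real.rpow_natCast_mul (hm _).le]; congr 1; push_cast; simp only [s]; field_simp
  have h : m (d + 1) ^ ((1 : ℝ) / (2 * (d + 1))) ≤
      max 1 (m 0) * m (d + 1 + 1) ^ ((1 : ℝ) / (2 * ((d + 1 : ℕ) + 1))) := by
    rw [hlow, hupp]
    calc (m (d + 1) ^ (d + 1 + 1)) ^ s ≤ (m 0 * m (d + 1 + 1) ^ (d + 1)) ^ s :=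
          Real.rpow_le_rpow (pow_nonneg (hm _).le _) (lyapunov_pow_succ_le hm hratio _)
            (by positivity)
      _ = m 0 ^ s * (m (d + 1 + 1) ^ (d + 1)) ^ s :=
          Real.mul_rpow (hm _).le (pow_nonneg (hm _).le _)
      _ ≤ _ := by
          refine mul_le_mul_of_nonneg_right ?_ (Real.rpow_nonneg (pow_nonneg (hm _).le _) _)
          exact rpow_le_max_one (hm 0).le (by positivity) hs
  rw [neg_div, neg_div, Real.rpow_neg (hm _).le, Real.rpow_neg (hm _).le, ← div_eq_mul_inv,
    le_div_iff₀ (Real.rpow_pos_of_pos (hm _) _),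
    inv_mul_le_iff₀ (Real.rpow_pos_of_pos (hm _) _),
    mul_comm (m (d + 1 + 1) ^ _)]
  exact h

theorem not_summable_even
    (h : ¬ Summable fun d : ℕ ↦ m (d + 1) ^ (-(1 : ℝ) / (2 * (d + 1)))) :
    ¬ Summable fun d : ℕ ↦ m (2 * (d + 1)) ^ (-(1 : ℝ) / (4 * (d + 1))) := by
  intro hs
  set b : ℕ → ℝ := fun d ↦ m (d + 1) ^ (-(1 : ℝ) / (2 * (d + 1)))
  have heven : Summable fun d ↦ b (2 * d + 1) := hs.congr fun d ↦ by
    have hexp : (2 * (((2 * d + 1 : ℕ) : ℝ) + 1)) = 4 * (d + 1) := by push_cast; ring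
    simp only [b, hexp, mul_add_one 2 d]
  have hodd : Summable fun d ↦ b (2 * d + 1 + 1) :=
    Summable.of_nonneg_of_le (fun d ↦ Real.rpow_nonneg (hm _).le _)
      (fun d ↦ rpow_neg_succ_le hm hratio (2 * d + 1)) (heven.mul_left _)
  exact h ((summable_nat_add_iff 1).1
    (HasSum.even_add_odd (f := fun d ↦ b (d + 1)) heven.hasSum hodd.hasSum).summable)

end LogConvex

/-! ### Orthogonality to polynomials and the Fourier transform -/

section Fourier

variable {α : Type*} [MeasurableSpace α] {μ : Measure α}

theorem integral_norm_mul_norm_le_sqrt {E F : Type*} [NormedAddCommGroup E]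
    [NormedAddCommGroup F] {f : α → E} {g : α → F} (hf : MemLp f 2 μ) (hg : MemLp g 2 μ) :
    ∫ a, ‖f a‖ * ‖g a‖ ∂μ ≤ √(∫ a, ‖f a‖ ^ 2 ∂μ) * √(∫ a, ‖g a‖ ^ 2 ∂μ) := by
  simpa [Real.sqrt_eq_rpow] using integral_mul_norm_le_Lp_mul_Lq (f := fun a ↦ ‖f a‖)
    (g := fun a ↦ ‖g a‖) Real.HolderConjugate.two_two (by simpa using hf.norm)
    (by simpa using hg.norm)

theorem norm_cexp_real_mul_real_mul_I (t s : ℝ) : ‖Complex.exp (t * s * Complex.I)‖ = 1 := by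
  rw [← Complex.ofReal_mul, Complex.norm_exp_ofReal_mul_I]

theorem hasDerivAt_integral_mul_cexp {v : α → ℂ} {ξ : α → ℝ} (hξ : AEMeasurable ξ μ)
    (hv : Integrable v μ) (hvξ : Integrable (fun a ↦ v a * (ξ a * Complex.I)) μ) (t : ℝ) :
    HasDerivAt (fun t : ℝ ↦ ∫ a, v a * Complex.exp (t * ξ a * Complex.I) ∂μ)
      (∫ a, v a * (ξ a * Complex.I) * Complex.exp (t * ξ a * Complex.I) ∂μ) t := by
  have hexp (t : ℝ) : AEStronglyMeasurable (fun a ↦ Complex.exp (t * ξ a * Complex.I)) μ := by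
    refine (AEMeasurable.cexp ?_).aestronglyMeasurable
    fun_prop
  refine (hasDerivAt_integral_of_dominated_loc_of_deriv_le Filter.univ_mem
    (F := fun (t : ℝ) a ↦ v a * Complex.exp (t * ξ a * Complex.I))
    (F' := fun (t : ℝ) a ↦ v a * (ξ a * Complex.I) * Complex.exp (t * ξ a * Complex.I))
    (bound := fun a ↦ ‖v a * (ξ a * Complex.I)‖)
    (.of_forall fun t ↦ hv.aestronglyMeasurable.mul (hexp t)) ?_
    (hvξ.aestronglyMeasurable.mul (hexp t)) (ae_of_all _ fun a t _ ↦ ?_) hvξ.norm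
    (ae_of_all _ fun a t _ ↦ ?_)).2
  · exact hv.mono (hv.aestronglyMeasurable.mul (hexp t)) (ae_of_all _ fun a ↦ by
      rw [norm_mul, norm_cexp_real_mul_real_mul_I, mul_one])
  · rw [norm_mul _ (Complex.exp _), norm_cexp_real_mul_real_mul_I, mul_one]
  · have hlin : HasDerivAt (fun t : ℝ ↦ (t * ξ a * Complex.I : ℂ)) (ξ a * Complex.I) t := by
      simpa [mul_assoc] using (hasDerivAt_id t).ofReal_comp.mul_const (ξ a * Complex.I : ℂ)
    exact (hlin.cexp.const_mul (v a)).congr_deriv (by ring)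

theorem integral_mul_cexp_eq_zero_of_moments {v : α → ℂ} {ξ : α → ℝ} (hξ : AEMeasurable ξ μ)
    (hv : ∀ k : ℕ, Integrable (fun a ↦ v a * (ξ a : ℂ) ^ k) μ)
    (h0 : ∀ k : ℕ, ∫ a, v a * (ξ a : ℂ) ^ k ∂μ = 0)
    {M : ℕ → ℝ} (hM : ∀ k, 0 < M k) (hratio : Monotone fun k ↦ M (k + 1) / M k)
    (hdiv : ¬ Summable fun d : ℕ ↦ M (d + 1) ^ (-(1 : ℝ) / (2 * (d + 1))))
    {K : ℝ} (hK : 0 < K) (hb : ∀ k, ∫ a, ‖v a * (ξ a : ℂ) ^ k‖ ∂μ ≤ K * √(M k)) (t : ℝ) :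
    ∫ a, v a * Complex.exp (t * ξ a * Complex.I) ∂μ = 0 := by
  have hmul (k : ℕ) (a : α) :
      v a * (ξ a * Complex.I) ^ k = Complex.I ^ k * (v a * (ξ a : ℂ) ^ k) := by ring
  have hint (k : ℕ) : Integrable (fun a ↦ v a * (ξ a * Complex.I) ^ k) μ := by
    simpa only [hmul] using (hv k).const_mul _
  have hderiv (k : ℕ) (t : ℝ) := hasDerivAt_integral_mul_cexp hξ (hint k)
    (by simpa only [mul_assoc, ← pow_succ] using hint (k + 1)) t
  have hsqrt (k : ℕ) : 0 < √(M k) := Real.sqrt_pos.2 (hM k)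
  have h := eq_zero_of_quasianalytic (M := fun k ↦ K * √(M k))
    (f := fun k t ↦ ∫ a, v a * (ξ a * Complex.I) ^ k * Complex.exp (t * ξ a * Complex.I) ∂μ)
    (fun k t ↦ by simpa only [mul_assoc (v _), ← pow_succ] using hderiv k t)
    (fun k ↦ mul_pos hK (hsqrt k)) ?_ (fun k t ↦ ?_) (fun k ↦ ?_) ?_ t
  · simpa using h
  · intro k l hkl
    simp only [mul_div_mul_left _ _ hK.ne', ← Real.sqrt_div' _ (hM _).le]
    exact Real.sqrt_le_sqrt (hratio hkl)
  · refine (norm_integral_le_integral_norm _).trans (le_of_eq_of_le ?_ (hb k))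
    refine integral_congr_ae (ae_of_all _ fun a ↦ ?_)
    simp only [norm_mul, norm_pow, norm_cexp_real_mul_real_mul_I, Complex.norm_I, mul_one]
  · simp [hmul, integral_const_mul, h0]
  · simpa only [mul_div_mul_left _ _ hK.ne', ← Real.sqrt_div' _ (hM _).le] using
      not_summable_sqrt_ratio hM hdiv

/-- The positive and negative parts of `u` define measures with the same characteristic function. -/
theorem ae_eq_zero_of_integral_mul_cexp_dual_eq_zero {E : Type*} [NormedAddCommGroup E]
    [NormedSpace ℝ E] [CompleteSpace E] [SecondCountableTopology E] [MeasurableSpace E]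
    [BorelSpace E] {μ : Measure E} {u : E → ℝ} (hu : Integrable u μ)
    (h : ∀ L : StrongDual ℝ E, ∫ y, (u y : ℂ) * Complex.exp (L y * Complex.I) ∂μ = 0) :
    u =ᵐ[μ] 0 := by
  have hpos : AEMeasurable (fun y ↦ ENNReal.ofReal (u y)) μ := hu.aemeasurable.ennreal_ofReal
  have hneg : AEMeasurable (fun y ↦ ENNReal.ofReal (-u y)) μ :=
    hu.neg.aemeasurable.ennreal_ofReal
  have hpos_fin := isFiniteMeasure_withDensity hu.lintegral_lt_top.ne
  have hneg_fin := isFiniteMeasure_withDensity hu.neg.lintegral_lt_top.ne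
  have hint (L : StrongDual ℝ E) {v : E → ℝ} (hv : Integrable v μ) :
      Integrable (fun y ↦ (ENNReal.ofReal (v y)).toReal • Complex.exp (L y * Complex.I)) μ := by
    refine hv.mono (hv.aemeasurable.ennreal_ofReal.ennreal_toReal.aestronglyMeasurable.smul
      (Continuous.aestronglyMeasurable (by fun_prop))) (ae_of_all _ fun y ↦ ?_)
    rw [norm_smul, Complex.norm_exp_ofReal_mul_I, mul_one, ENNReal.toReal_ofReal',
      Real.norm_eq_abs, Real.norm_eq_abs, abs_of_nonneg (le_max_right _ _)]
    exact max_le (le_abs_self _) (abs_nonneg _)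
  have heq : μ.withDensity (fun y ↦ ENNReal.ofReal (u y)) =
      μ.withDensity (fun y ↦ ENNReal.ofReal (-u y)) := by
    refine Measure.ext_of_charFunDual (funext fun L ↦ ?_)
    rw [charFunDual_apply, charFunDual_apply,
      integral_withDensity_eq_integral_toReal_smul₀ hpos (by simp),
      integral_withDensity_eq_integral_toReal_smul₀ hneg (by simp), ← sub_eq_zero,
      ← integral_sub (hint L hu) (hint L (v := fun y ↦ -u y) hu.neg), ← h L]
    refine integral_congr_ae (ae_of_all _ fun y ↦ ?_)
    beta_reduce
    rw [← sub_smul, ENNReal.toReal_ofReal', ENNReal.toReal_ofReal',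
      max_zero_sub_max_neg_zero_eq_self, Complex.real_smul]
  filter_upwards [(withDensity_eq_iff hpos hneg hu.lintegral_lt_top.ne).1 heq] with y hy
  have hparts := max_zero_sub_max_neg_zero_eq_self (u y)
  rwa [← ENNReal.toReal_ofReal', ← ENNReal.toReal_ofReal', hy, sub_self, eq_comm] at hparts

end Fourier

/-! ### Density of polynomials under the Carleman condition -/

section Carleman

variable {m : ℕ} {ν : Measure (Fin m → ℝ)}

section Moments

variable (hmom : momentsFinite ν)

include hmom

theorem momentsFinite.integrable_eval (P : MvPolynomial (Fin m) ℝ) :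
    Integrable (fun y ↦ eval y P) ν :=
  (integrable_norm_iff (MvPolynomial.continuous_eval P).aestronglyMeasurable).1 (hmom P)

theorem momentsFinite.memLp_eval (P : MvPolynomial (Fin m) ℝ) :
    MemLp (fun y ↦ eval y P) 2 ν := by
  rw [memLp_two_iff_integrable_sq (MvPolynomial.continuous_eval P).aestronglyMeasurable]
  simpa using (hmom.integrable_eval (P ^ 2) :)

theorem momentsFinite.integrable_pow (j : Fin m) (k : ℕ) : Integrable (fun y ↦ y j ^ k) ν := by
  simpa using hmom.integrable_eval (X j ^ k)

theorem Carleman.moment_pos (hcar : Carleman ν) (j : Fin m) (k : ℕ) :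
    0 < ∫ y, y j ^ (2 * k) ∂ν := by
  have hnonneg (y : Fin m → ℝ) : 0 ≤ y j ^ (2 * k) := (even_two_mul k).pow_nonneg _
  refine (integral_nonneg hnonneg).lt_of_ne' fun h0 ↦ hcar j ?_
  rw [integral_eq_zero_iff_of_nonneg hnonneg (hmom.integrable_pow j _)] at h0
  have hzero (d : ℕ) : ∫ y, y j ^ (2 * (d + 1)) ∂ν = 0 := by
    refine integral_eq_zero_of_ae (h0.mono fun y hy ↦ ?_)
    simp [eq_zero_of_pow_eq_zero hy]
  refine summable_zero.congr fun d ↦ ?_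
  rw [hzero, Real.zero_rpow (div_ne_zero (by simp) (by positivity))]

theorem Carleman.monotone_moment_ratio (hcar : Carleman ν) (j : Fin m) :
    Monotone fun k ↦ (∫ y, y j ^ (2 * (k + 1)) ∂ν) / ∫ y, y j ^ (2 * k) ∂ν := by
  refine monotone_nat_of_le_succ fun k ↦ ?_
  have hLp (l : ℕ) : MemLp (fun y ↦ y j ^ l) 2 ν := by simpa using hmom.memLp_eval (X j ^ l)
  have hnorm (y : Fin m → ℝ) : ‖y j ^ k‖ * ‖y j ^ (k + 2)‖ = y j ^ (2 * (k + 1)) := by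
    rw [← norm_mul, ← pow_add, show k + (k + 2) = 2 * (k + 1) by ring,
      Real.norm_of_nonneg ((even_two_mul _).pow_nonneg _)]
  have hsq (l : ℕ) (y : Fin m → ℝ) : ‖y j ^ l‖ ^ 2 = y j ^ (2 * l) := by
    rw [Real.norm_eq_abs, sq_abs, ← pow_mul, mul_comm]
  have h := integral_norm_mul_norm_le_sqrt (hLp k) (hLp (k + 2))
  simp only [hnorm, hsq] at h
  rw [← Real.sqrt_mul (hcar.moment_pos hmom j k).le,
    Real.le_sqrt' (hcar.moment_pos hmom j (k + 1))] at h
  rw [div_le_div_iff₀ (hcar.moment_pos hmom j k) (hcar.moment_pos hmom j (k + 1)), ← sq]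
  linarith

end Moments

/-- The measure `(1 + P²) dν`: weighting by `P` preserves the Carleman condition. -/
noncomputable def sqWeighted (ν : Measure (Fin m → ℝ)) (P : MvPolynomial (Fin m) ℝ) :
    Measure (Fin m → ℝ) :=
  ν.withDensity fun y ↦ ENNReal.ofReal (1 + eval y P ^ 2)

section SqWeighted

variable (P : MvPolynomial (Fin m) ℝ)

theorem integral_sqWeighted (f : (Fin m → ℝ) → ℝ) :
    ∫ y, f y ∂sqWeighted ν P = ∫ y, (1 + eval y P ^ 2) * f y ∂ν := by
  have hpos (y : Fin m → ℝ) : 0 ≤ 1 + eval y P ^ 2 := by positivity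
  rw [sqWeighted, integral_withDensity_eq_integral_toReal_smul
    (by have := MvPolynomial.continuous_eval P; fun_prop) (by simp)]
  simp only [ENNReal.toReal_ofReal (hpos _), smul_eq_mul]

theorem integrable_sqWeighted {f : (Fin m → ℝ) → ℝ} :
    Integrable f (sqWeighted ν P) ↔ Integrable (fun y ↦ (1 + eval y P ^ 2) * f y) ν := by
  have hpos (y : Fin m → ℝ) : 0 ≤ 1 + eval y P ^ 2 := by positivity
  rw [sqWeighted, integrable_withDensity_iff_integrable_smul'
    (by have := MvPolynomial.continuous_eval P; fun_prop) (by simp)]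
  simp only [ENNReal.toReal_ofReal (hpos _), smul_eq_mul]

variable (hmom : momentsFinite ν)

include hmom

protected theorem momentsFinite.sqWeighted : momentsFinite (sqWeighted ν P) := fun Q ↦ by
  refine Integrable.abs ?_
  rw [integrable_sqWeighted]
  simpa using (hmom.integrable_eval ((1 + P ^ 2) * Q) :)

theorem moment_le_moment_sqWeighted (j : Fin m) (k : ℕ) :
    ∫ y, y j ^ (2 * k) ∂ν ≤ ∫ y, y j ^ (2 * k) ∂sqWeighted ν P := by
  rw [integral_sqWeighted]
  refine integral_mono (hmom.integrable_pow j _)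
    ((integrable_sqWeighted P).1 ((hmom.sqWeighted P).integrable_pow j _)) fun y ↦ ?_
  exact le_mul_of_one_le_left ((even_two_mul k).pow_nonneg _) (by simp [sq_nonneg])

theorem moment_sqWeighted_le (j : Fin m) (k : ℕ) :
    ∫ y, y j ^ (2 * k) ∂sqWeighted ν P ≤
      √(∫ y, (1 + eval y P ^ 2) ^ 2 ∂ν) * √(∫ y, y j ^ (2 * (2 * k)) ∂ν) := by
  have hP : MemLp (fun y ↦ 1 + eval y P ^ 2) 2 ν := by
    simpa using (hmom.memLp_eval (1 + P ^ 2) :)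
  have hpow : MemLp (fun y ↦ y j ^ (2 * k)) 2 ν := by simpa using hmom.memLp_eval (X j ^ (2 * k))
  rw [integral_sqWeighted]
  convert integral_norm_mul_norm_le_sqrt hP hpow using 5 with y y y
  · exact (Real.norm_of_nonneg (by positivity)).symm
  · exact (Real.norm_of_nonneg ((even_two_mul k).pow_nonneg _)).symm
  · rw [Real.norm_eq_abs, sq_abs]
  · rw [Real.norm_eq_abs, sq_abs, ← pow_mul, mul_comm]

protected theorem Carleman.sqWeighted (hcar : Carleman ν) : Carleman (sqWeighted ν P) := by
  refine fun j hs ↦ not_summable_even (hcar.moment_pos hmom j) (hcar.monotone_moment_ratio hmom j)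
    (hcar j) ?_
  set B := √(∫ y, (1 + eval y P ^ 2) ^ 2 ∂ν)
  refine Summable.of_nonneg_of_le (fun d ↦ Real.rpow_nonneg (hcar.moment_pos hmom j _).le _)
    (fun d ↦ ?_) (hs.mul_left (max 1 B))
  have hm := hcar.moment_pos hmom j (2 * (d + 1))
  have hM := (hcar.moment_pos hmom j (d + 1)).trans_le (moment_le_moment_sqWeighted P hmom j _)
  have hexp : -(1 : ℝ) / (4 * (d + 1)) = 1 / 2 * -(1 / (2 * (d + 1))) := by field_simp; norm_num
  have hroot := Real.rpow_le_rpow hM.le (moment_sqWeighted_le P hmom j (d + 1))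
    (by positivity : (0 : ℝ) ≤ 1 / (2 * (d + 1)))
  rw [Real.mul_rpow (Real.sqrt_nonneg _) (Real.sqrt_nonneg _)] at hroot
  rw [hexp, Real.rpow_mul hm.le, ← Real.sqrt_eq_rpow, neg_div, Real.rpow_neg (Real.sqrt_nonneg _),
    Real.rpow_neg hM.le, ← div_eq_mul_inv,
    inv_le_iff_one_le_mul₀ (Real.rpow_pos_of_pos (Real.sqrt_pos.2 hm) _), div_mul_eq_mul_div,
    one_le_div (Real.rpow_pos_of_pos hM _)]
  refine hroot.trans (mul_le_mul_of_nonneg_right ?_ (Real.rpow_nonneg (Real.sqrt_nonneg _) _))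
  exact rpow_le_max_one (Real.sqrt_nonneg _) (by positivity) (one_div_two_mul_succ_le_one d)

end SqWeighted

section Density

variable (hmom : momentsFinite ν) (hcar : Carleman ν)

include hmom hcar

theorem Carleman.integral_mul_cexp_mul_eval_eq_zero {u : (Fin m → ℝ) → ℂ} (hu : MemLp u 2 ν)
    (horth : ∀ P : MvPolynomial (Fin m) ℝ, ∫ y, u y * (eval y P : ℂ) ∂ν = 0)
    (j : Fin m) (t : ℝ) (P : MvPolynomial (Fin m) ℝ) :
    ∫ y, u y * Complex.exp (t * y j * Complex.I) * (eval y P : ℂ) ∂ν = 0 := by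
  have heval (k : ℕ) (y : Fin m → ℝ) :
      u y * (eval y P : ℂ) * (y j : ℂ) ^ k = u y * (eval y (P * X j ^ k) : ℂ) := by
    simp [mul_assoc]
  have hLp (Q : MvPolynomial (Fin m) ℝ) : MemLp (fun y ↦ ((eval y Q : ℝ) : ℂ)) 2 ν :=
    (hmom.memLp_eval Q).ofReal
  have hcarP := hcar.sqWeighted P hmom
  have hmomP := hmom.sqWeighted P
  have h := integral_mul_cexp_eq_zero_of_moments (v := fun y ↦ u y * (eval y P : ℂ))
    (ξ := fun y ↦ y j) (K := 1 + √(∫ y, ‖u y‖ ^ 2 ∂ν)) (measurable_pi_apply j).aemeasurable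
    (fun k ↦ by simpa only [heval, Pi.mul_def] using hu.integrable_mul (hLp _))
    (fun k ↦ by simpa only [heval] using horth _)
    (hcarP.moment_pos hmomP j) (hcarP.monotone_moment_ratio hmomP j) (hcarP j)
    (by positivity) (fun k ↦ ?_) t
  · simpa only [mul_right_comm] using h
  · simp only [heval, norm_mul]
    refine (integral_norm_mul_norm_le_sqrt hu (hLp _)).trans (mul_le_mul (by simp)
      (Real.sqrt_le_sqrt ?_) (Real.sqrt_nonneg _) (by positivity))
    rw [integral_sqWeighted]
    refine integral_mono ((hLp (P * X j ^ k)).integrable_norm_pow two_ne_zero)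
      ((integrable_sqWeighted P).1 (hmomP.integrable_pow j _)) fun y ↦ ?_
    simp only [map_mul, map_pow, eval_X, Complex.norm_real, Real.norm_eq_abs, sq_abs]
    rw [mul_pow, ← pow_mul, mul_comm k]
    exact mul_le_mul_of_nonneg_right (by simp) ((even_two_mul k).pow_nonneg _)

theorem Carleman.integral_mul_cexp_sum_mul_eval_eq_zero {u : (Fin m → ℝ) → ℂ} (hu : MemLp u 2 ν)
    (horth : ∀ P : MvPolynomial (Fin m) ℝ, ∫ y, u y * (eval y P : ℂ) ∂ν = 0)
    (t : Fin m → ℝ) (s : Finset (Fin m)) (P : MvPolynomial (Fin m) ℝ) :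
    ∫ y, u y * Complex.exp (∑ j ∈ s, t j * y j * Complex.I) * (eval y P : ℂ) ∂ν = 0 := by
  induction s using Finset.induction_on generalizing P with
  | empty => simpa using horth P
  | insert j s hj ih =>
    have hnorm (y : Fin m → ℝ) : ‖Complex.exp (∑ j ∈ s, t j * y j * Complex.I)‖ = 1 := by
      rw [Complex.exp_sum, norm_prod]
      exact prod_eq_one fun j _ ↦ norm_cexp_real_mul_real_mul_I _ _
    have hexp : MemLp (fun y ↦ u y * Complex.exp (∑ j ∈ s, t j * y j * Complex.I)) 2 ν :=
      hu.mono (hu.aestronglyMeasurable.mul (Continuous.aestronglyMeasurable (by fun_prop)))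
        (ae_of_all _ fun y ↦ by rw [norm_mul, hnorm, mul_one])
    simpa only [sum_insert hj, Complex.exp_add, mul_assoc, mul_comm, mul_left_comm] using
      hcar.integral_mul_cexp_mul_eval_eq_zero hmom hexp ih j (t j) P

theorem Carleman.ae_eq_zero_of_orthogonal {u : (Fin m → ℝ) → ℝ} (hu : MemLp u 2 ν)
    (horth : ∀ P : MvPolynomial (Fin m) ℝ, ∫ y, u y * eval y P ∂ν = 0) : u =ᵐ[ν] 0 := by
  refine ae_eq_zero_of_integral_mul_cexp_dual_eq_zero
    (by simpa [Pi.mul_def] using hu.integrable_mul (hmom.memLp_eval 1)) fun L ↦ ?_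
  have hL (y : Fin m → ℝ) :
      ∑ j, (L (Pi.single j 1) * y j * Complex.I : ℂ) = L y * Complex.I := by
    rw [← sum_mul]
    congr 1
    conv_rhs => rw [pi_eq_sum_univ' y]
    simp [mul_comm]
  simpa [hL] using hcar.integral_mul_cexp_sum_mul_eval_eq_zero hmom (hu.ofReal (K := ℂ))
    (fun P ↦ by
      simp only [RCLike.ofReal_eq_complex_ofReal, ← Complex.ofReal_mul]
      rw [integral_complex_ofReal, horth P, Complex.ofReal_zero])
    (fun j ↦ L (Pi.single j 1)) univ 1

end Density

/-- The class of a polynomial in `L²(ν)`. -/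
protected noncomputable def momentsFinite.toLp (hmom : momentsFinite ν) :
    MvPolynomial (Fin m) ℝ →ₗ[ℝ] Lp ℝ 2 ν where
  toFun P := (hmom.memLp_eval P).toLp _
  map_add' P Q := by
    rw [← MemLp.toLp_add]
    exact MemLp.toLp_congr _ _ (ae_of_all _ fun y ↦ map_add _ P Q)
  map_smul' c P := by
    rw [RingHom.id_apply, ← MemLp.toLp_const_smul]
    exact MemLp.toLp_congr _ _ (ae_of_all _ fun y ↦ smul_eval y P c)

theorem momentsFinite.coeFn_toLp (hmom : momentsFinite ν) (P : MvPolynomial (Fin m) ℝ) :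
    hmom.toLp P =ᵐ[ν] fun y ↦ eval y P :=
  (hmom.memLp_eval P).coeFn_toLp

theorem Carleman.denseRange_toLp (hmom : momentsFinite ν) (hcar : Carleman ν) :
    DenseRange hmom.toLp := by
  rw [DenseRange, ← LinearMap.coe_range, Submodule.dense_iff_topologicalClosure_eq_top,
    Submodule.topologicalClosure_eq_top_iff, Submodule.eq_bot_iff]
  refine fun u hu ↦ (Lp.eq_zero_iff_ae_eq_zero).2
    (hcar.ae_eq_zero_of_orthogonal hmom (Lp.memLp u) fun P ↦ ?_)
  rw [← (Submodule.mem_orthogonal _ _).1 hu _ ⟨P, rfl⟩, L2.inner_def]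
  exact integral_congr_ae ((hmom.coeFn_toLp P).mono fun y hy ↦ by simp [hy])

end Carleman

section Detection

theorem continuous_integral_mul_sq {α : Type*} [MeasurableSpace α] {μ : Measure α} {w : α → ℝ}
    (hw : MemLp w ⊤ μ) : Continuous fun φ : Lp ℝ 2 μ ↦ ∫ a, φ a ^ 2 * w a ∂μ := by
  let T := (ContinuousLinearMap.mul ℝ ℝ).holderL μ ⊤ 2 2 (hw.toLp w)
  suffices h : ∀ φ : Lp ℝ 2 μ, ∫ a, φ a ^ 2 * w a ∂μ = inner ℝ φ (T φ) by
    simp only [h]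
    fun_prop
  intro φ
  rw [L2.inner_def]
  refine integral_congr_ae ?_
  filter_upwards [hw.coeFn_toLp, (ContinuousLinearMap.mul ℝ ℝ).coeFn_holder (r := 2)
    (hw.toLp w) φ] with a hwa hTa
  rw [ContinuousLinearMap.holderL_apply_apply, hTa, hwa]
  simp only [ContinuousLinearMap.mul_apply', RCLike.inner_apply, conj_trivial]
  ring

theorem setIntegral_neg_of_mem_support {α : Type*} [TopologicalSpace α] [MeasurableSpace α]
    [OpensMeasurableSpace α] {μ : Measure α} {f : α → ℝ} (hf : Continuous f) (hfi : Integrable f μ)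
    {a : α} (ha : a ∈ μ.support) (hfa : f a < 0) : ∫ x in {x | f x < 0}, f x ∂μ < 0 := by
  have hopen : IsOpen {x | f x < 0} := isOpen_lt hf continuous_const
  rw [← neg_pos, ← integral_neg, setIntegral_pos_iff_support_of_nonneg_ae
    ?_ (f := fun x ↦ -f x) hfi.neg.integrableOn]
  · refine ((Measure.mem_support_iff_forall a).1 ha _ (hopen.mem_nhds hfa)).trans_le ?_
    exact measure_mono fun x hx ↦ ⟨(neg_pos.2 hx).ne', hx⟩
  · filter_upwards [ae_restrict_mem hopen.measurableSet] with x hx using (neg_pos.2 hx).le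

variable {m : ℕ} {ν : Measure (Fin m → ℝ)}

/-- Polynomials are dense in `L²((1 + g²) dν)`, where `g / (1 + g²)` is a bounded multiplier, so
the indicator function of `{g < 0}` can be replaced by a polynomial. -/
theorem Carleman.exists_integral_sq_mul_neg (hcar : Carleman ν) (hmom : momentsFinite ν)
    (g : MvPolynomial (Fin m) ℝ) {y₀ : Fin m → ℝ} (hy₀ : y₀ ∈ ν.support) (hg : eval y₀ g < 0) :
    ∃ h : MvPolynomial (Fin m) ℝ, ∫ y, eval y h ^ 2 * eval y g ∂ν < 0 := by
  have hmom' := hmom.sqWeighted g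
  have hcont : Continuous fun y ↦ eval y g := MvPolynomial.continuous_eval g
  have hone (y : Fin m → ℝ) : 0 < 1 + eval y g ^ 2 := by positivity
  have hw : MemLp (fun y ↦ eval y g / (1 + eval y g ^ 2)) ⊤ (sqWeighted ν g) := by
    refine memLp_top_of_bound (hcont.div (by fun_prop)
      fun y ↦ (hone y).ne').aestronglyMeasurable 1 (ae_of_all _ fun y ↦ ?_)
    rw [norm_div, Real.norm_of_nonneg (hone y).le, div_le_one (hone y), Real.norm_eq_abs]
    nlinarith [sq_abs (eval y g), sq_nonneg (|eval y g| - 1)]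
  have hweight (φ : (Fin m → ℝ) → ℝ) :
      ∫ y, φ y ^ 2 * (eval y g / (1 + eval y g ^ 2)) ∂sqWeighted ν g =
        ∫ y, φ y ^ 2 * eval y g ∂ν := by
    rw [integral_sqWeighted]
    congr with y
    field_simp [(hone y).ne']
  have hneg : MeasurableSet {y | eval y g < 0} := (isOpen_lt hcont continuous_const).measurableSet
  have hind : MemLp ({y | eval y g < 0}.indicator fun _ ↦ (1 : ℝ)) 2 (sqWeighted ν g) := by
    simpa using (hmom'.memLp_eval 1).indicator hneg
  have hind_neg : ∫ y, hind.toLp _ y ^ 2 * (eval y g / (1 + eval y g ^ 2)) ∂sqWeighted ν g < 0 := by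
    rw [integral_congr_ae (hind.coeFn_toLp.mono fun y hy ↦ by rw [hy]), hweight]
    convert setIntegral_neg_of_mem_support hcont (hmom.integrable_eval g) hy₀ hg using 1
    rw [← integral_indicator hneg]
    congr with y
    by_cases hy : eval y g < 0 <;> simp [hy]
  obtain ⟨h, hh⟩ := (hcar.sqWeighted g hmom).denseRange_toLp hmom' |>.exists_mem_open
    (isOpen_lt (continuous_integral_mul_sq hw) continuous_const) ⟨_, hind_neg⟩
  refine ⟨h, ?_⟩
  rwa [Set.mem_ofPred_eq, integral_congr_ae ((hmom'.coeFn_toLp h).mono fun y hy ↦ by rw [hy]),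
    hweight] at hh

end Detection

section PosDef

variable {α ι : Type*} [TopologicalSpace α] [Finite ι]

theorem isOpen_setOf_posDef {A : α → Matrix ι ι ℝ} (hA : Continuous A)
    (hsymm : ∀ a, (A a).IsSymm) : IsOpen {a | (A a).PosDef} := by
  cases nonempty_fintype ι
  have hsphere (a : α) : (A a).PosDef ↔
      ∀ w ∈ Metric.sphere (0 : ι → ℝ) 1, 0 < w ⬝ᵥ A a *ᵥ w := by
    refine ⟨fun h w hw ↦ h.dotProduct_mulVec_pos (ne_zero_of_mem_unit_sphere ⟨w, hw⟩), fun h ↦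
      .of_dotProduct_mulVec_pos (isHermitian_iff_isSymm.2 (hsymm a)) fun w hw ↦ ?_⟩
    have hscaled := h (‖w‖⁻¹ • w) (by simp [norm_smul, hw])
    rw [mulVec_smul, smul_dotProduct, dotProduct_smul, smul_smul, smul_eq_mul] at hscaled
    exact pos_of_mul_pos_right hscaled (by positivity)
  simp only [hsphere, isOpen_iff_eventually, Set.mem_ofPred_eq]
  intro a ha
  refine (isCompact_sphere 0 1).eventually_forall_of_forall_eventually fun w hw ↦ ?_
  have hcont : Continuous fun b : α × (ι → ℝ) ↦ b.2 ⬝ᵥ A b.1 *ᵥ b.2 := by fun_prop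
  exact hcont.continuousAt.eventually (lt_mem_nhds (ha w hw))

variable [DecidableEq ι]

theorem eventually_posDef_add_smul_one {A : Matrix ι ι ℝ} (hA : A.IsSymm) :
    ∀ᶠ c : ℝ in Filter.atTop, (A + c • (1 : Matrix ι ι ℝ)).PosDef := by
  cases nonempty_fintype ι
  have hopen : IsOpen {t : ℝ | (t • A + 1).PosDef} :=
    isOpen_setOf_posDef (by fun_prop) fun t ↦ (hA.smul t).add isSymm_one
  have hzero : (0 : ℝ) ∈ {t : ℝ | (t • A + 1).PosDef} := by simpa using PosDef.one
  filter_upwards [tendsto_inv_atTop_zero.eventually (hopen.mem_nhds hzero),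
    Filter.eventually_gt_atTop 0] with c hc hc0
  simpa [smul_add, smul_smul, hc0.ne'] using PosDef.smul hc hc0

theorem eventually_posDef_add_smul_one_of_tendsto_zero {β : Type*} {l : Filter β} {φ : β → ℝ}
    {A : Matrix ι ι ℝ} (hA : A.PosDef) (hφ : Filter.Tendsto φ l (nhds 0)) :
    ∀ᶠ b in l, (A + φ b • (1 : Matrix ι ι ℝ)).PosDef := by
  have hsymm : A.IsSymm := isHermitian_iff_isSymm.1 hA.isHermitian
  have hopen : IsOpen {t : ℝ | (A + t • (1 : Matrix ι ι ℝ)).PosDef} :=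
    isOpen_setOf_posDef (by fun_prop) fun t ↦ hsymm.add (isSymm_one.smul t)
  exact hφ.eventually (hopen.mem_nhds (by simpa using hA))

/-- As in Dini's theorem, monotonicity makes the pointwise index uniform. -/
theorem exists_forall_posDef_add_smul_one {Z : Set α} (hZ : IsCompact Z) {A : α → Matrix ι ι ℝ}
    (hA : Continuous A) (hsymm : ∀ a, (A a).IsSymm) {φ : ℕ → α → ℝ}
    (hφ : ∀ s, Continuous (φ s)) (hmono : ∀ a ∈ Z, Monotone fun s ↦ φ s a)
    (hpos : ∀ a ∈ Z, ∃ s, (A a + φ s a • (1 : Matrix ι ι ℝ)).PosDef) :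
    ∃ s, ∀ a ∈ Z, (A a + φ s a • (1 : Matrix ι ι ℝ)).PosDef := by
  cases nonempty_fintype ι
  let U (s : ℕ) : Set α := {a | (A a + φ s a • (1 : Matrix ι ι ℝ)).PosDef}
  have hU (s : ℕ) : IsOpen (U s) :=
    isOpen_setOf_posDef (hA.add ((hφ s).smul continuous_const))
      fun a ↦ (hsymm a).add (isSymm_one.smul _)
  obtain ⟨t, ht⟩ := hZ.elim_finite_subcover U hU fun a ha ↦ Set.mem_iUnion.2 (hpos a ha)
  refine ⟨t.sup id, fun a ha ↦ ?_⟩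
  obtain ⟨s, hs, has⟩ := Set.mem_iUnion₂.1 (ht ha)
  have hle : φ s a ≤ φ (t.sup id) a := hmono a ha (Finset.le_sup (f := id) hs)
  simpa [add_assoc, ← add_smul] using
    PosDef.add_posSemidef has (PosSemidef.one.smul (sub_nonneg.2 hle))

end PosDef

/-! ### Pólya's theorem for matrix forms -/

section Polya

variable {K : Type*} [Fintype K]

/-- The polynomial function `z ↦ Q(z)` with every power `z_k ^ a` replaced by the falling product
`z_k (z_k - t) ⋯ (z_k - (a - 1) t)`, which deforms `Q(z)` into multinomial data as `t` goes from
`0` to `1`. -/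
noncomputable def fallingEval (t : ℝ) (z : K → ℝ) (Q : MvPolynomial K ℝ) : ℝ :=
  ∑ α ∈ Q.support, coeff α Q * ∏ k, ∏ l ∈ range (α k), (z k - l * t)

theorem fallingEval_zero (z : K → ℝ) : fallingEval 0 z = eval z := by
  ext Q
  simp [fallingEval, eval_eq']

@[fun_prop]
theorem continuous_fallingEval (Q : MvPolynomial K ℝ) :
    Continuous fun a : ℝ × (K → ℝ) ↦ fallingEval a.1 a.2 Q := by
  unfold fallingEval
  fun_prop

theorem fallingEval_smul {d : ℕ} {Q : MvPolynomial K ℝ} (hQ : Q.IsHomogeneous d) (c t : ℝ)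
    (z : K → ℝ) : fallingEval (c * t) (c • z) Q = c ^ d * fallingEval t z Q := by
  rw [fallingEval, fallingEval, mul_sum]
  refine sum_congr rfl fun α hα ↦ ?_
  have hd : d = ∑ k, α k := by
    rw [← Finsupp.degree_eq_sum, Finsupp.degree_apply, hQ.degree_eq_sum_deg_support hα]
  have hfactor (k : K) (l : ℕ) : (c • z) k - l * (c * t) = c * (z k - l * t) := by
    rw [Pi.smul_apply, smul_eq_mul]
    ring
  simp only [hfactor, prod_mul_distrib, prod_const, card_range, prod_pow_eq_pow_sum, ← hd]
  ring

theorem prod_descFactorial_eq_prod_sub (α β : K → ℕ) :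
    ∏ k, ((β k).descFactorial (α k) : ℝ) = ∏ k, ∏ l ∈ range (α k), ((β k : ℝ) - l) := by
  refine prod_congr rfl fun k _ ↦ ?_
  rw [← descPochhammer_eval_eq_descFactorial, descPochhammer_eval_eq_prod_range]

theorem multinomial_tsub_mul_prod_factorial {α β : K →₀ ℕ} (hle : α ≤ β) :
    (β - α).multinomial * ∏ k, (β k).factorial =
      (β - α).degree.factorial * ∏ k, (β k).descFactorial (α k) := by
  have hfac (k : K) : (β k).factorial = ((β - α) k).factorial * (β k).descFactorial (α k) :=
    (Nat.factorial_mul_descFactorial (hle k)).symm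
  rw [← Finsupp.multinomial_of_support_subset (subset_univ _), Finsupp.degree_eq_sum,
    ← Nat.multinomial_spec]
  simp only [hfac, prod_mul_distrib]
  ring

theorem coeff_sum_X_pow_mul {d N : ℕ} {Q : MvPolynomial K ℝ} (hQ : Q.IsHomogeneous d)
    {β : K →₀ ℕ} (hβ : β.degree = N + d) :
    coeff β ((∑ k, X k) ^ N * Q) * ∏ k, ((β k).factorial : ℝ) =
      N.factorial * fallingEval 1 (fun k ↦ β k) Q := by
  classical
  conv_lhs => rw [Q.as_sum, mul_sum, coeff_sum, sum_mul]
  rw [fallingEval, mul_sum]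
  refine sum_congr rfl fun α hα ↦ ?_
  simp only [mul_one, ← prod_descFactorial_eq_prod_sub, coeff_mul_monomial']
  split_ifs with hle
  · have hdeg : (β - α).degree = N := by
      have hadd := congrArg Finsupp.degree (tsub_add_cancel_of_le hle)
      rw [map_add, hβ, Finsupp.degree_apply α, ← hQ.degree_eq_sum_deg_support hα] at hadd
      exact Nat.add_right_cancel hadd
    have hcount : ((β - α).multinomial : ℝ) * ∏ k, ((β k).factorial : ℝ) =
        N.factorial * ∏ k, ((β k).descFactorial (α k) : ℝ) := by
      exact_mod_cast hdeg ▸ multinomial_tsub_mul_prod_factorial hle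
    rw [coeff_sum_X_pow_of_fintype, if_pos (by rwa [Finsupp.sum, ← Finsupp.degree_apply])]
    linear_combination coeff α Q * hcount
  · obtain ⟨k, hk⟩ : ∃ k, β k < α k := by simpa [Finsupp.le_def] using hle
    have hzero : ∏ k, ((β k).descFactorial (α k) : ℝ) = 0 :=
      prod_eq_zero (mem_univ k) (by rw [Nat.descFactorial_eq_zero_iff_lt.2 hk, Nat.cast_zero])
    rw [hzero, zero_mul, mul_zero, mul_zero]

theorem isHomogeneous_sum_X : (∑ k, X k : MvPolynomial K ℝ).IsHomogeneous 1 :=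
  .sum _ _ _ fun k _ ↦ isHomogeneous_X ℝ k

variable {ι : Type*}

theorem map_coeff_sum_X_pow_smul {d N : ℕ} {P : Matrix ι ι (MvPolynomial K ℝ)}
    (hP : ∀ i j, (P i j).IsHomogeneous d) (hNd : 0 < N + d) {β : K →₀ ℕ}
    (hβ : β.degree = N + d) :
    ((∑ k, X k : MvPolynomial K ℝ) ^ N • P).map (coeff β) =
      (N.factorial * (N + d : ℝ) ^ d / ∏ k, ((β k).factorial : ℝ)) •
        P.map (fallingEval (1 / (N + d)) fun k ↦ β k / (N + d)) := by
  ext i j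
  have hNd' : (N + d : ℝ) ≠ 0 := by exact_mod_cast hNd.ne'
  have hfac : ∏ k, ((β k).factorial : ℝ) ≠ 0 :=
    prod_ne_zero_iff.2 fun k _ ↦ by exact_mod_cast (β k).factorial_ne_zero
  have hscale := fallingEval_smul (hP i j) (N + d) (1 / (N + d)) fun k ↦ β k / (N + d)
  rw [mul_one_div_cancel hNd', show (N + d : ℝ) • (fun k ↦ (β k / (N + d) : ℝ)) = fun k ↦ (β k : ℝ)
    by ext; simp [mul_div_cancel₀ _ hNd']] at hscale
  simp only [Matrix.map_apply, Matrix.smul_apply, smul_eq_mul]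
  rw [div_mul_eq_mul_div, eq_div_iff hfac, coeff_sum_X_pow_mul (hP i j) hβ, hscale, mul_assoc]

/-- The coefficient of `z ^ β` is, up to a positive factor, the deformation of `P` with parameter
`t = 1 / |β|` at the point `β / |β|` of the simplex, and `t → 0`. -/
theorem eventually_posSemidef_map_coeff_sum_X_pow_smul [Finite ι] {d : ℕ}
    {P : Matrix ι ι (MvPolynomial K ℝ)} (hPs : P.IsSymm) (hP : ∀ i j, (P i j).IsHomogeneous d)
    (hpos : ∀ z ∈ stdSimplex ℝ K, (evalMat z P).PosDef) :
    ∀ᶠ N in Filter.atTop, ∀ β,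
      (((∑ k, X k : MvPolynomial K ℝ) ^ N • P).map (coeff β)).PosSemidef := by
  cases nonempty_fintype ι
  have hopen : IsOpen {a : ℝ × (K → ℝ) | (P.map (fallingEval a.1 a.2)).PosDef} :=
    isOpen_setOf_posDef (continuous_matrix fun i j ↦ continuous_fallingEval (P i j))
      fun a ↦ hPs.map _
  have hnear : ∀ᶠ t in nhds (0 : ℝ), ∀ z ∈ stdSimplex ℝ K, (P.map (fallingEval t z)).PosDef := by
    refine (isCompact_stdSimplex ℝ K).eventually_forall_of_forall_eventually fun z hz ↦
      hopen.mem_nhds ?_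
    simpa only [Set.mem_ofPred_eq, fallingEval_zero, evalMat] using hpos z hz
  have hlim : Filter.Tendsto (fun N : ℕ ↦ 1 / (N + d : ℝ)) Filter.atTop (nhds 0) := by
    simp only [one_div]
    exact tendsto_inv_atTop_zero.comp
      (Filter.tendsto_atTop_add_const_right _ _ tendsto_natCast_atTop_atTop)
  filter_upwards [hlim.eventually hnear, Filter.eventually_gt_atTop 0] with N hN hN0 β
  by_cases hβ : β.degree = N + d
  · rw [map_coeff_sum_X_pow_smul hP (by lia) hβ]
    refine (hN _ ⟨fun k ↦ by positivity, ?_⟩).posSemidef.smul (by positivity)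
    have hNd : (N + d : ℝ) ≠ 0 := by positivity
    rw [← sum_div, div_eq_one_iff_eq hNd]
    exact_mod_cast (Finsupp.degree_eq_sum β).symm.trans hβ
  · convert PosSemidef.zero using 1
    ext i j
    refine ((isHomogeneous_sum_X.pow N).mul (hP i j)).coeff_eq_zero ?_
    rwa [one_mul]

end Polya

section SOS

variable {σ ι : Type*} [Fintype ι]

theorem isSOSMatrix_transpose_mul_self {κ : Type*} [Fintype κ]
    (T : Matrix κ ι (MvPolynomial σ ℝ)) : IsSOSMatrix (Tᵀ * T) := by
  refine ⟨Fintype.card κ, T.submatrix (Fintype.equivFin κ).symm id, ?_⟩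
  rw [transpose_submatrix, submatrix_mul_equiv, submatrix_id_id]

namespace IsSOSMatrix

variable {A B : Matrix ι ι (MvPolynomial σ ℝ)}

protected theorem zero : IsSOSMatrix (0 : Matrix ι ι (MvPolynomial σ ℝ)) :=
  ⟨0, 0, by rw [Matrix.mul_zero]⟩

protected theorem add (hA : IsSOSMatrix A) (hB : IsSOSMatrix B) : IsSOSMatrix (A + B) := by
  obtain ⟨k, S, rfl⟩ := hA
  obtain ⟨l, T, rfl⟩ := hB
  simpa only [transpose_fromRows, fromCols_mul_fromRows] using
    isSOSMatrix_transpose_mul_self (fromRows S T)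

protected theorem sum {κ : Type*} {s : Finset κ} {A : κ → Matrix ι ι (MvPolynomial σ ℝ)}
    (hA : ∀ k ∈ s, IsSOSMatrix (A k)) : IsSOSMatrix (∑ k ∈ s, A k) :=
  Finset.sum_induction _ _ (fun _ _ ↦ IsSOSMatrix.add) IsSOSMatrix.zero hA

theorem sq_smul (hA : IsSOSMatrix A) (g : MvPolynomial σ ℝ) : IsSOSMatrix (g ^ 2 • A) := by
  obtain ⟨k, S, rfl⟩ := hA
  exact ⟨k, g • S, by rw [transpose_smul, smul_mul, Matrix.mul_smul, smul_smul, sq]⟩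

protected theorem smul (hA : IsSOSMatrix A) {c : ℝ} (hc : 0 ≤ c) : IsSOSMatrix (c • A) := by
  convert hA.sq_smul (C √c) using 1
  rw [← map_pow, Real.sq_sqrt hc]
  ext1 i j
  simp [smul_eq_C_mul]

end IsSOSMatrix

theorem isSOSMatrix_map_C {A : Matrix ι ι ℝ} (hA : A.PosSemidef) :
    IsSOSMatrix (A.map (C : ℝ → MvPolynomial σ ℝ)) := by
  obtain ⟨l, v, rfl⟩ := posSemidef_iff_eq_sum_vecMulVec.1 hA
  refine ⟨l, (Matrix.of v).map C, ?_⟩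
  ext1 i j
  simp [mul_apply, Matrix.sum_apply, vecMulVec_apply]

theorem isSOSMatrix_map_aeval_sq {K : Type*} [Finite K] {R : Matrix ι ι (MvPolynomial K ℝ)}
    (hR : ∀ β, (R.map (coeff β)).PosSemidef) (ℓ : K → MvPolynomial σ ℝ) :
    IsSOSMatrix (R.map (aeval fun k ↦ ℓ k ^ 2)) := by
  classical
  cases nonempty_fintype K
  let S : Finset (K →₀ ℕ) := univ.biUnion fun i ↦ univ.biUnion fun j ↦ (R i j).support
  have hS (i j : ι) : (R i j).support ⊆ S := fun β hβ ↦
    mem_biUnion.2 ⟨i, mem_univ i, mem_biUnion.2 ⟨j, mem_univ j, hβ⟩⟩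
  have hsum : R.map (aeval fun k ↦ ℓ k ^ 2) =
      ∑ β ∈ S, (∏ k, ℓ k ^ β k) ^ 2 • (R.map (coeff β)).map C := by
    ext1 i j
    simp only [Matrix.sum_apply, Matrix.smul_apply, Matrix.map_apply, smul_eq_mul]
    rw [aeval_def, eval₂_eq', algebraMap_eq]
    refine (sum_subset (hS i j) fun β _ hβ ↦ ?_).trans (sum_congr rfl fun β _ ↦ ?_)
    · rw [notMem_support_iff.1 hβ, map_zero, zero_mul]
    · simp only [← prod_pow, pow_right_comm _ 2, mul_comm]
  rw [hsum]
  exact IsSOSMatrix.sum fun β _ ↦ (isSOSMatrix_map_C (hR β)).sq_smul _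

end SOS

/-! ### Reznick's theorem for matrix forms -/

section Reznick

variable {σ : Type*}

/-- The linear forms `x_i + x_j` and `x_i - x_j`; their squares span the quadratic forms. -/
noncomputable def pairForm : σ × σ × Bool → MvPolynomial σ ℝ
  | (i, j, true) => X i + X j
  | (i, j, false) => X i - X j

/-- The substitution `z_k ↦ (pairForm k)²`. -/
noncomputable def pairSubst : MvPolynomial (σ × σ × Bool) ℝ →ₐ[ℝ] MvPolynomial σ ℝ :=
  aeval fun k ↦ pairForm k ^ 2

/-- A linear form that `pairSubst` sends to `x_i x_j`. -/
noncomputable def pairLift (i j : σ) : MvPolynomial (σ × σ × Bool) ℝ :=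
  C (1 / 4) * (X (i, j, true) - X (i, j, false))

/-- A linear form that `pairSubst` sends to `pairForm k * x_a`. -/
noncomputable def pairFormLift : σ × σ × Bool → σ → MvPolynomial (σ × σ × Bool) ℝ
  | (i, j, true), a => pairLift i a + pairLift j a
  | (i, j, false), a => pairLift i a - pairLift j a

theorem pairSubst_X (k : σ × σ × Bool) : pairSubst (X k) = pairForm k ^ 2 :=
  aeval_X _ k

theorem eval_pairSubst (x : σ → ℝ) (q : MvPolynomial (σ × σ × Bool) ℝ) :
    eval x (pairSubst q) = eval (fun k ↦ eval x (pairForm k) ^ 2) q := by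
  have h := comp_aeval_apply (fun k : σ × σ × Bool ↦ pairForm k ^ 2) (aeval x) q
  simp only [map_pow] at h
  exact h

theorem isHomogeneous_pairLift (i j : σ) : (pairLift i j).IsHomogeneous 1 :=
  ((isHomogeneous_X ℝ _).sub (isHomogeneous_X ℝ _)).C_mul _

theorem isHomogeneous_pairFormLift (k : σ × σ × Bool) (a : σ) :
    (pairFormLift k a).IsHomogeneous 1 := by
  obtain ⟨i, j, _ | _⟩ := k
  · exact (isHomogeneous_pairLift i a).sub (isHomogeneous_pairLift j a)
  · exact (isHomogeneous_pairLift i a).add (isHomogeneous_pairLift j a)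

theorem pairSubst_pairLift (i j : σ) : pairSubst (pairLift i j) = X i * X j := by
  have hquarter : (C (1 / 4) : MvPolynomial σ ℝ) * 4 = 1 := by
    rw [← map_ofNat C 4, ← C_mul, one_div_mul_cancel four_ne_zero, C_1]
  simp only [pairLift, pairForm, map_mul, map_sub, pairSubst_X, algHom_C, algebraMap_eq]
  linear_combination X i * X j * hquarter

theorem pairSubst_pairFormLift (k : σ × σ × Bool) (a : σ) :
    pairSubst (pairFormLift k a) = pairForm k * X a := by
  obtain ⟨i, j, _ | _⟩ := k <;>
    simp [pairFormLift, pairForm, pairSubst_pairLift, add_mul, sub_mul]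

theorem exists_isHomogeneous_pairSubst_eq {d : ℕ} {P : MvPolynomial σ ℝ}
    (hP : P.IsHomogeneous (2 * d)) :
    ∃ Q : MvPolynomial (σ × σ × Bool) ℝ, Q.IsHomogeneous d ∧ pairSubst Q = P := by
  have hquadratic : homogeneousSubmodule σ ℝ 2 ≤
      (homogeneousSubmodule (σ × σ × Bool) ℝ 1).map pairSubst.toLinearMap := by
    rw [← homogeneousSubmodule_one_pow, homogeneousSubmodule_one_eq_span_X, sq,
      Submodule.span_mul_span, Submodule.span_le]
    rintro _ ⟨_, ⟨i, rfl⟩, _, ⟨j, rfl⟩, rfl⟩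
    exact ⟨pairLift i j, isHomogeneous_pairLift i j, pairSubst_pairLift i j⟩
  have hle : homogeneousSubmodule σ ℝ (2 * d) ≤
      (homogeneousSubmodule (σ × σ × Bool) ℝ d).map pairSubst.toLinearMap := by
    rw [← homogeneousSubmodule_one_pow _ (2 * d), pow_mul, homogeneousSubmodule_one_pow _ 2,
      ← homogeneousSubmodule_one_pow _ d, Submodule.map_pow]
    exact pow_le_pow_left' hquadratic d
  exact hle hP

variable {ι : Type*}

theorem exists_isSymm_isHomogeneous_map_pairSubst_eq {d : ℕ}
    {P : Matrix ι ι (MvPolynomial σ ℝ)} (hPs : P.IsSymm)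
    (hP : ∀ i j, (P i j).IsHomogeneous (2 * d)) :
    ∃ Q : Matrix ι ι (MvPolynomial (σ × σ × Bool) ℝ),
      Q.IsSymm ∧ (∀ i j, (Q i j).IsHomogeneous d) ∧ Q.map pairSubst = P := by
  choose L hL hLP using fun i j ↦ exists_isHomogeneous_pairSubst_eq (hP i j)
  refine ⟨Matrix.of fun i j ↦ C (1 / 2) * (L i j + L j i), IsSymm.ext fun i j ↦ ?_,
    fun i j ↦ ((hL i j).add (hL j i)).C_mul _, ?_⟩
  · simp only [of_apply, add_comm]
  · ext1 i j
    have hhalf : (C (1 / 2) : MvPolynomial σ ℝ) * 2 = 1 := by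
      rw [← map_ofNat C 2, ← C_mul, one_div_mul_cancel two_ne_zero, C_1]
    simp only [Matrix.map_apply, of_apply, map_mul, map_add, hLP, hPs.apply i j, algHom_C,
      algebraMap_eq]
    linear_combination P i j * hhalf

theorem eval_pairForm_div (z : σ × σ × Bool → ℝ) (a : σ) (r : ℝ) (k : σ × σ × Bool) :
    eval (fun i ↦ eval z (pairLift i a) / r) (pairForm k) = eval z (pairFormLift k a) / r := by
  obtain ⟨i, j, _ | _⟩ := k
  · simp [pairForm, pairFormLift, sub_div]
  · simp [pairForm, pairFormLift, add_div]

theorem evalMat_pairForm_sq (x : σ → ℝ) (Q : Matrix ι ι (MvPolynomial (σ × σ × Bool) ℝ)) :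
    evalMat (fun k ↦ eval x (pairForm k) ^ 2) Q = evalMat x (Q.map pairSubst) := by
  ext1 i j
  exact (eval_pairSubst x (Q i j)).symm

theorem continuous_evalMat (P : Matrix ι ι (MvPolynomial σ ℝ)) :
    Continuous fun x : σ → ℝ ↦ evalMat x P :=
  continuous_matrix fun i j ↦ MvPolynomial.continuous_eval (P i j)

variable [Fintype σ]

/-- The form `‖x‖² = ∑ x_i²`. -/
noncomputable abbrev normSqForm (σ : Type*) [Fintype σ] : MvPolynomial σ ℝ :=
  ∑ i, X i ^ 2

theorem pairSubst_sum_X :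
    pairSubst (∑ k, X k) = C (4 * Fintype.card σ : ℝ) * normSqForm σ := by
  have hsq (i j : σ) : ((X i + X j) ^ 2 + (X i - X j) ^ 2 : MvPolynomial σ ℝ) =
      2 * X i ^ 2 + 2 * X j ^ 2 := by ring
  rw [map_sum]
  simp only [pairSubst_X, Fintype.sum_prod_type, Fintype.sum_bool, pairForm, hsq,
    sum_add_distrib, ← mul_sum, sum_const, card_univ, nsmul_eq_mul, C_mul, map_ofNat, map_natCast]
  ring

/-- A form in the kernel of `pairSubst` which is nonnegative and whose only zeros on the standard
simplex are the points `(pairForm k x)²`. If `S` is the symmetric matrix with entries `pairLift`,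
the summands say that `4 n tr S = ∑ z_k` and `z_k S_aa = (pairFormLift k a)²`. -/
noncomputable def pairRel (σ : Type*) [Fintype σ] : MvPolynomial (σ × σ × Bool) ℝ :=
  (∑ k, X k - C (4 * Fintype.card σ : ℝ) * ∑ a, pairLift a a) ^ 4 +
    ∑ k, ∑ a, (X k * pairLift a a - pairFormLift k a ^ 2) ^ 2

theorem isHomogeneous_pairRel : (pairRel σ).IsHomogeneous 4 := by
  have hdiag : (∑ a : σ, pairLift a a).IsHomogeneous 1 :=
    .sum _ _ _ fun a _ ↦ isHomogeneous_pairLift a a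
  exact ((isHomogeneous_sum_X.sub (hdiag.C_mul _)).pow 4).add <|
    .sum _ _ _ fun k _ ↦ .sum _ _ _ fun a _ ↦
      (((isHomogeneous_X ℝ k).mul (isHomogeneous_pairLift a a)).sub
        ((isHomogeneous_pairFormLift k a).pow 2)).pow 2

theorem pairSubst_pairRel : pairSubst (pairRel σ) = (0 : MvPolynomial σ ℝ) := by
  have hdiag : pairSubst (∑ a, pairLift a a) = normSqForm σ := by
    simp only [map_sum, pairSubst_pairLift, ← sq]
  have htrace : pairSubst
      (∑ k, X k - C (4 * Fintype.card σ : ℝ) * ∑ a : σ, pairLift a a) = 0 := by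
    rw [map_sub, map_mul pairSubst, hdiag, pairSubst_sum_X, algHom_C, algebraMap_eq, sub_self]
  have hrank (k : σ × σ × Bool) (a : σ) :
      pairSubst (X k * pairLift a a - pairFormLift k a ^ 2) = 0 := by
    rw [map_sub, map_mul, map_pow, pairSubst_X, pairSubst_pairLift, pairSubst_pairFormLift]
    ring
  rw [pairRel, map_add, map_pow, htrace, map_sum]
  simp only [map_sum, map_pow, hrank, ne_eq, OfNat.ofNat_ne_zero, not_false_eq_true, zero_pow,
    sum_const_zero, add_zero]

theorem eval_pairRel (z : σ × σ × Bool → ℝ) :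
    eval z (pairRel σ) = (∑ k, z k - 4 * Fintype.card σ * ∑ a, eval z (pairLift a a)) ^ 4 +
      ∑ k, ∑ a, (z k * eval z (pairLift a a) - eval z (pairFormLift k a) ^ 2) ^ 2 := by
  simp only [pairRel, map_add, map_sum, map_pow, map_sub, map_mul, eval_X, eval_C]

theorem eval_pairRel_nonneg (z : σ × σ × Bool → ℝ) : 0 ≤ eval z (pairRel σ) := by
  rw [eval_pairRel]
  positivity

/-- A zero of `pairRel` on the simplex has `S_aa > 0` for some `a`; then `x_i = S_ia / √S_aa`. -/
theorem exists_eval_pairForm_sq_eq {z : σ × σ × Bool → ℝ} (hz : ∑ k, z k = 1)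
    (hrel : eval z (pairRel σ) = 0) :
    ∃ x : σ → ℝ, x ≠ 0 ∧ z = fun k ↦ eval x (pairForm k) ^ 2 := by
  rw [eval_pairRel, add_eq_zero_iff_of_nonneg (by positivity) (by positivity),
    pow_eq_zero_iff four_ne_zero, sub_eq_zero, hz] at hrel
  obtain ⟨htrace, hrank⟩ := hrel
  replace hrank (k : σ × σ × Bool) (a : σ) :
      z k * eval z (pairLift a a) = eval z (pairFormLift k a) ^ 2 := by
    rw [sum_eq_zero_iff_of_nonneg fun _ _ ↦ by positivity] at hrank
    have hk := (sum_eq_zero_iff_of_nonneg fun _ _ ↦ by positivity).1 (hrank k (mem_univ k)) a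
      (mem_univ a)
    exact sub_eq_zero.1 (pow_eq_zero_iff two_ne_zero |>.1 hk)
  obtain ⟨a, ha⟩ : ∃ a, 0 < eval z (pairLift a a) := by
    by_contra! hnonpos
    have hsum : ∑ a, eval z (pairLift a a) ≤ 0 := sum_nonpos fun a _ ↦ hnonpos a
    nlinarith [Nat.cast_nonneg (α := ℝ) (Fintype.card σ)]
  have hform (k : σ × σ × Bool) :
      eval (fun i ↦ eval z (pairLift i a) / √(eval z (pairLift a a))) (pairForm k) ^ 2 = z k := by
    rw [eval_pairForm_div, div_pow, Real.sq_sqrt ha.le, ← hrank, mul_div_cancel_right₀ _ ha.ne']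
  refine ⟨_, fun hzero ↦ ?_, funext fun k ↦ (hform k).symm⟩
  have hpos : 0 < eval z (pairLift a a) / √(eval z (pairLift a a)) := by positivity
  exact hpos.ne' (congrFun hzero a)

theorem exists_posDef_evalMat_add_pairRel [Finite ι] [DecidableEq ι]
    {Q : Matrix ι ι (MvPolynomial (σ × σ × Bool) ℝ)}
    (hQ : Q.IsSymm) (hpos : ∀ x : σ → ℝ, x ≠ 0 → (evalMat x (Q.map pairSubst)).PosDef) :
    ∃ s : ℕ, ∀ z ∈ stdSimplex ℝ (σ × σ × Bool),
      (evalMat z Q + (s * eval z (pairRel σ)) • (1 : Matrix ι ι ℝ)).PosDef := by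
  refine exists_forall_posDef_add_smul_one (isCompact_stdSimplex ℝ _) (continuous_evalMat Q)
    (fun z ↦ hQ.map _) (fun s ↦ (MvPolynomial.continuous_eval _).const_mul _)
    (fun z _ s t hst ↦ ?_) fun z hz ↦ ?_
  · have := eval_pairRel_nonneg z
    dsimp only
    gcongr
  · rcases (eval_pairRel_nonneg z).eq_or_lt' with hzero | hrel
    · obtain ⟨x, hx, rfl⟩ := exists_eval_pairForm_sq_eq hz.2 hzero
      exact ⟨0, by simpa [evalMat_pairForm_sq] using hpos x hx⟩
    · exact ((tendsto_natCast_atTop_atTop.atTop_mul_const hrel).eventually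
        (eventually_posDef_add_smul_one (hQ.map _))).exists

/-- **Reznick's theorem** for matrices: write `P` as a form in the squares `(x_i ± x_j)²`, make that
form positive definite on the whole simplex by adding a multiple of `pairRel`, and apply Pólya's
theorem. -/
theorem eventually_isSOSMatrix_normSqForm_pow_smul [Fintype ι] {d : ℕ}
    {P : Matrix ι ι (MvPolynomial σ ℝ)}
    (hPs : P.IsSymm) (hP : ∀ i j, (P i j).IsHomogeneous (2 * d))
    (hpos : ∀ x : σ → ℝ, x ≠ 0 → (evalMat x P).PosDef) :
    ∀ᶠ N in Filter.atTop, IsSOSMatrix (normSqForm σ ^ N • P) := by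
  classical
  obtain ⟨Q, hQs, hQ, rfl⟩ := exists_isSymm_isHomogeneous_map_pairSubst_eq hPs hP
  obtain ⟨s, hs⟩ := exists_posDef_evalMat_add_pairRel hQs hpos
  let e : MvPolynomial (σ × σ × Bool) ℝ := ∑ k, X k
  let R := e ^ 4 • Q + (e ^ d * (C (s : ℝ) * pairRel σ)) • (1 : Matrix ι ι _)
  have hR (i j : ι) : (R i j).IsHomogeneous (4 + d) := by
    refine .add (by simpa using (isHomogeneous_sum_X.pow 4).mul (hQ i j)) ?_
    rw [Matrix.smul_apply, one_apply, smul_ite, smul_zero, smul_eq_mul, mul_one]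
    split_ifs
    · simpa [add_comm] using (isHomogeneous_sum_X.pow d).mul (isHomogeneous_pairRel.C_mul (s : ℝ))
    · exact isHomogeneous_zero _ _ _
  have hRpos (z) (hz : z ∈ stdSimplex ℝ (σ × σ × Bool)) : (evalMat z R).PosDef := by
    convert hs z hz using 1
    ext1 i j
    simp [R, e, evalMat, hz.2, one_apply, apply_ite (eval z)]
  have hRP (N : ℕ) : (e ^ N • R).map pairSubst = pairSubst e ^ (N + 4) • Q.map pairSubst := by
    ext1 i j
    simp only [R, Matrix.map_apply, Matrix.smul_apply, Matrix.add_apply, smul_eq_mul, map_mul,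
      map_add, map_pow, pairSubst_pairRel]
    ring
  have hnorm : normSqForm σ = (4 * Fintype.card σ : ℝ)⁻¹ • pairSubst e := by
    rcases isEmpty_or_nonempty σ
    · simp [normSqForm, e]
    · rw [pairSubst_sum_X, ← smul_eq_C_mul, inv_smul_smul₀ (by positivity)]
  rw [← Filter.map_add_atTop_eq_nat 4, Filter.eventually_map]
  filter_upwards [eventually_posSemidef_map_coeff_sum_X_pow_smul
    ((hQs.smul _).add (isSymm_one.smul _)) hR hRpos] with N hN
  have hsos : IsSOSMatrix ((e ^ N • R).map pairSubst) := isSOSMatrix_map_aeval_sq hN pairForm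
  rw [hnorm, smul_pow, smul_assoc, ← hRP]
  exact hsos.smul (by positivity)

end Reznick

/-! ### Finitely many constraints -/

section FinitelyManyConstraints

variable {σ ι κ : Type*}

theorem evalMat_smul {d : ℕ} {P : Matrix ι ι (MvPolynomial σ ℝ)}
    (hP : ∀ i j, (P i j).IsHomogeneous d) (c : ℝ) (x : σ → ℝ) :
    evalMat (c • x) P = c ^ d • evalMat x P := by
  ext1 i j
  simp only [evalMat, Matrix.map_apply, Matrix.smul_apply, smul_eq_mul, eval_eq, mul_sum]
  refine sum_congr rfl fun β hβ ↦ ?_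
  simp only [Pi.smul_apply, smul_eq_mul, mul_pow, prod_mul_distrib, prod_pow_eq_pow_sum,
    ← (hP i j).degree_eq_sum_deg_support hβ]
  ring

variable [Fintype σ]

/-- The Euclidean unit sphere of `σ → ℝ`, a type which itself carries the sup norm. -/
def euclideanSphere (σ : Type*) [Fintype σ] : Set (σ → ℝ) :=
  {x | ∑ i, x i ^ 2 = 1}

theorem isCompact_euclideanSphere : IsCompact (euclideanSphere σ) := by
  refine (isCompact_closedBall (0 : σ → ℝ) 1).of_isClosed_subset
    (isClosed_eq (by fun_prop) continuous_const) fun x hx ↦ ?_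
  rw [mem_closedBall_zero_iff, pi_norm_le_iff_of_nonneg zero_le_one]
  intro i
  rw [Real.norm_eq_abs, ← sq_le_one_iff_abs_le_one]
  exact (single_le_sum (fun i _ ↦ sq_nonneg (x i)) (mem_univ i)).trans_eq hx

theorem ne_zero_of_mem_euclideanSphere {x : σ → ℝ} (hx : x ∈ euclideanSphere σ) : x ≠ 0 := by
  rintro rfl
  simp [euclideanSphere] at hx

theorem exists_pos_smul_mem_euclideanSphere {x : σ → ℝ} (hx : x ≠ 0) :
    ∃ r : ℝ, 0 < r ∧ ∃ z ∈ euclideanSphere σ, x = r • z := by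
  obtain ⟨i, hi⟩ := Function.ne_iff.1 hx
  have hpos : 0 < ∑ i, x i ^ 2 :=
    sum_pos' (fun i _ ↦ sq_nonneg _) ⟨i, mem_univ i, sq_pos_of_ne_zero hi⟩
  have hr : 0 < √(∑ i, x i ^ 2) := Real.sqrt_pos.2 hpos
  refine ⟨_, hr, _, ?_, (smul_inv_smul₀ hr.ne' x).symm⟩
  simp only [euclideanSphere, Set.mem_ofPred_eq, Pi.smul_apply, smul_eq_mul, mul_pow, ← mul_sum]
  rw [inv_pow, Real.sq_sqrt hpos.le, inv_mul_cancel₀ hpos.ne']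

theorem posDef_evalMat_of_euclideanSphere {d : ℕ} {P : Matrix ι ι (MvPolynomial σ ℝ)}
    (hP : ∀ i j, (P i j).IsHomogeneous d)
    (hpos : ∀ x ∈ euclideanSphere σ, (evalMat x P).PosDef) {x : σ → ℝ} (hx : x ≠ 0) :
    (evalMat x P).PosDef := by
  obtain ⟨r, hr, z, hz, rfl⟩ := exists_pos_smul_mem_euclideanSphere hx
  rw [evalMat_smul hP]
  exact (hpos z hz).smul (pow_pos hr d)

theorem antitone_mul_one_sub_pow {t : ℝ} (ht : |t| ≤ 1) :
    Antitone fun s : ℕ ↦ t * (1 - t) ^ (2 * s) := by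
  obtain ⟨_, _⟩ := abs_le.1 ht
  intro r s hrs
  rcases le_or_gt 0 t with h | h
  · exact mul_le_mul_of_nonneg_left
      (pow_le_pow_of_le_one (by linarith) (by linarith) (by lia)) h
  · exact mul_le_mul_of_nonpos_left (pow_le_pow_right₀ (by linarith) (by lia)) h.le

theorem tendsto_mul_one_sub_pow_zero {t : ℝ} (h0 : 0 ≤ t) (h1 : t ≤ 1) :
    Filter.Tendsto (fun s : ℕ ↦ t * (1 - t) ^ (2 * s)) Filter.atTop (nhds 0) := by
  rcases h0.eq_or_lt with rfl | hpos
  · simp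
  · have hlt : (1 - t) ^ 2 < 1 := by nlinarith
    simpa only [pow_mul, mul_zero] using
      (tendsto_pow_atTop_nhds_zero_of_lt_one (sq_nonneg _) hlt).const_mul t

theorem tendsto_mul_one_sub_pow_atBot {t : ℝ} (ht : t < 0) :
    Filter.Tendsto (fun s : ℕ ↦ t * (1 - t) ^ (2 * s)) Filter.atTop Filter.atBot := by
  have hlt : 1 < (1 - t) ^ 2 := by nlinarith
  simpa only [pow_mul] using (tendsto_pow_atTop_atTop_of_one_lt hlt).const_mul_atTop_of_neg ht

/-- With `Φ_s = ∑ g_k (1 - g_k)^(2s)`, a decreasing sequence: `Φ_s → 0` where all `g_k ≥ 0`, and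
`Φ_s → -∞` elsewhere. -/
theorem exists_forall_posDef_sub_sum_smul_one {α : Type*} [TopologicalSpace α] [Fintype κ]
    [Finite ι] [DecidableEq ι] {Z : Set α} (hZ : IsCompact Z) {A : α → Matrix ι ι ℝ}
    (hA : Continuous A) (hsymm : ∀ a, (A a).IsSymm) {g : κ → α → ℝ} (hg : ∀ k, Continuous (g k))
    (hg1 : ∀ k, ∀ a ∈ Z, |g k a| ≤ 1) (hpos : ∀ a ∈ Z, (∀ k, 0 ≤ g k a) → (A a).PosDef) :
    ∃ s : ℕ, ∀ a ∈ Z,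
      (A a - (∑ k, g k a * (1 - g k a) ^ (2 * s)) • (1 : Matrix ι ι ℝ)).PosDef := by
  simp only [sub_eq_add_neg (A _), ← neg_smul]
  have hanti (a) (ha : a ∈ Z) (k : κ) := antitone_mul_one_sub_pow (hg1 k a ha)
  refine exists_forall_posDef_add_smul_one hZ hA hsymm (fun s ↦ by fun_prop)
    (fun a ha r s hrs ↦ neg_le_neg <| sum_le_sum fun k _ ↦ hanti a ha k hrs) fun a ha ↦ ?_
  by_cases hall : ∀ k, 0 ≤ g k a
  · have hlim : Filter.Tendsto (fun s : ℕ ↦ -∑ k, g k a * (1 - g k a) ^ (2 * s))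
        Filter.atTop (nhds 0) := by
      simpa using (tendsto_finsetSum univ fun k _ ↦
        tendsto_mul_one_sub_pow_zero (hall k) (abs_le.1 (hg1 k a ha)).2).neg
    exact (eventually_posDef_add_smul_one_of_tendsto_zero (hpos a ha hall) hlim).exists
  · push Not at hall
    obtain ⟨k₀, hk₀⟩ := hall
    have hlim : Filter.Tendsto (fun s : ℕ ↦ ∑ k, g k a * (1 - g k a) ^ (2 * s))
        Filter.atTop Filter.atBot := by
      classical
      simp only [← add_sum_erase _ _ (mem_univ k₀)]
      exact Filter.tendsto_atBot_add_right_of_ge _ _ (tendsto_mul_one_sub_pow_atBot hk₀)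
        fun s ↦ sum_le_sum fun k _ ↦ hanti a ha k (Nat.zero_le s)
    exact ((Filter.tendsto_neg_atBot_atTop.comp hlim).eventually
      (eventually_posDef_add_smul_one (hsymm a))).exists

theorem isHomogeneous_normSqForm_pow (N : ℕ) : (normSqForm σ ^ N).IsHomogeneous (2 * N) :=
  (IsHomogeneous.sum _ _ 2 fun i _ ↦ isHomogeneous_X_pow i 2).pow N

theorem eval_normSqForm {x : σ → ℝ} (hx : x ∈ euclideanSphere σ) : eval x (normSqForm σ) = 1 := by
  simpa [normSqForm, euclideanSphere] using hx

/-- For `g` of degree `2e`, the form `‖x‖^(2f) (‖x‖^(2e) - g)^s`: it homogenizes `(1 - g)^s`, with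
enough spare factors of `‖x‖²` for `multiplierForm² g` to have the degree of a power of `‖x‖²`
times a form of degree `2f`. -/
noncomputable def multiplierForm (f e s : ℕ) (g : MvPolynomial σ ℝ) : MvPolynomial σ ℝ :=
  normSqForm σ ^ f * (normSqForm σ ^ e - g) ^ s

theorem isHomogeneous_multiplierForm (f s : ℕ) {e : ℕ} {g : MvPolynomial σ ℝ}
    (hg : g.IsHomogeneous (2 * e)) :
    (multiplierForm f e s g).IsHomogeneous (2 * (f + e * s)) := by
  rw [mul_add, ← mul_assoc]
  exact (isHomogeneous_normSqForm_pow f).mul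
    (((isHomogeneous_normSqForm_pow e).sub hg).pow s)

theorem eval_multiplierForm (f e s : ℕ) (g : MvPolynomial σ ℝ) {x : σ → ℝ}
    (hx : x ∈ euclideanSphere σ) :
    eval x (multiplierForm f e s g) = (1 - eval x g) ^ s := by
  simp [-map_sum, multiplierForm, eval_normSqForm hx]

variable [Fintype κ] [DecidableEq ι]

/-- The form that `F - ∑ g_k (1 - g_k)^(2s)` becomes when homogenized by powers of `‖x‖²`, for
`F` of degree `2f` and `g_k` of degree `2e`. -/
noncomputable def residualForm (F : Matrix ι ι (MvPolynomial σ ℝ)) (g : κ → MvPolynomial σ ℝ)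
    (f e s : ℕ) : Matrix ι ι (MvPolynomial σ ℝ) :=
  normSqForm σ ^ (f + (2 * s + 1) * e) • F - (∑ k, multiplierForm f e s (g k) ^ 2 * g k) • 1

theorem isHomogeneous_residualForm {F : Matrix ι ι (MvPolynomial σ ℝ)}
    {g : κ → MvPolynomial σ ℝ} {f e : ℕ} (hF : ∀ i j, (F i j).IsHomogeneous (2 * f))
    (hg : ∀ k, (g k).IsHomogeneous (2 * e)) (s : ℕ) (i j : ι) :
    (residualForm F g f e s i j).IsHomogeneous (2 * (2 * f + (2 * s + 1) * e)) := by
  simp only [residualForm, Matrix.sub_apply, Matrix.smul_apply, smul_eq_mul, one_apply, mul_ite,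
    mul_one, mul_zero]
  refine .sub ?_ ?_
  · rw [show 2 * (2 * f + (2 * s + 1) * e) = 2 * (f + (2 * s + 1) * e) + 2 * f by ring]
    exact (isHomogeneous_normSqForm_pow _).mul (hF i j)
  · split_ifs
    · rw [show 2 * (2 * f + (2 * s + 1) * e) = 2 * (f + e * s) * 2 + 2 * e by ring]
      exact .sum _ _ _ fun k _ ↦ ((isHomogeneous_multiplierForm f s (hg k)).pow 2).mul (hg k)
    · exact isHomogeneous_zero _ _ _

theorem evalMat_residualForm (F : Matrix ι ι (MvPolynomial σ ℝ)) (g : κ → MvPolynomial σ ℝ)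
    (f e s : ℕ) {x : σ → ℝ} (hx : x ∈ euclideanSphere σ) :
    evalMat x (residualForm F g f e s) =
      evalMat x F - (∑ k, eval x (g k) * (1 - eval x (g k)) ^ (2 * s)) • (1 : Matrix ι ι ℝ) := by
  ext1 i j
  simp only [evalMat, residualForm, Matrix.map_apply, Matrix.sub_apply, Matrix.smul_apply,
    smul_eq_mul, map_sub, map_mul, map_pow, eval_normSqForm hx, eval_sum,
    eval_multiplierForm _ _ _ _ hx, one_apply, apply_ite (eval x), map_one, map_zero, one_pow,
    one_mul, ← pow_mul', mul_comm]

theorem exists_normSqForm_pow_smul_eq_add [Fintype ι] {F : Matrix ι ι (MvPolynomial σ ℝ)}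
    {g : κ → MvPolynomial σ ℝ} {f e : ℕ} (hFs : F.IsSymm)
    (hF : ∀ i j, (F i j).IsHomogeneous (2 * f)) (hg : ∀ k, (g k).IsHomogeneous (2 * e))
    (hg1 : ∀ k, ∀ x ∈ euclideanSphere σ, |eval x (g k)| ≤ 1)
    (hpos : ∀ x ∈ euclideanSphere σ, (∀ k, 0 ≤ eval x (g k)) → (evalMat x F).PosDef) :
    ∃ (N D : ℕ) (S : Matrix ι ι (MvPolynomial σ ℝ)) (p : κ → MvPolynomial σ ℝ),
      2 * N + 2 * f = 2 * D + 2 * e ∧ IsSOSMatrix S ∧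
      (∀ i j, (S i j).IsHomogeneous (2 * N + 2 * f)) ∧ (∀ k, (p k).IsHomogeneous D) ∧
      normSqForm σ ^ N • F = S + (∑ k, p k ^ 2 * g k) • 1 := by
  obtain ⟨s, hs⟩ := exists_forall_posDef_sub_sum_smul_one isCompact_euclideanSphere
    (continuous_evalMat F) (fun x ↦ hFs.map _) (fun k ↦ MvPolynomial.continuous_eval (g k))
    hg1 hpos
  have hR := isHomogeneous_residualForm hF hg s
  have hRs : (residualForm F g f e s).IsSymm := (hFs.smul _).sub (isSymm_one.smul _)
  have hRpos : ∀ x ∈ euclideanSphere σ, (evalMat x (residualForm F g f e s)).PosDef :=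
    fun x hx ↦ evalMat_residualForm F g f e s hx ▸ hs x hx
  obtain ⟨M, hM⟩ := Filter.eventually_atTop.1 <| eventually_isSOSMatrix_normSqForm_pow_smul hRs hR
    fun x ↦ posDef_evalMat_of_euclideanSphere hR hRpos
  -- An even exponent, so that the power of `‖x‖²` is absorbed into the squares `p k ^ 2`.
  refine ⟨2 * M + (f + (2 * s + 1) * e), 2 * M + 2 * (f + e * s), _,
    fun k ↦ normSqForm σ ^ M * multiplierForm f e s (g k), by ring, hM (2 * M) (by lia),
    fun i j ↦ ?_, fun k ↦ (isHomogeneous_normSqForm_pow M).mul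
      (isHomogeneous_multiplierForm f s (hg k)), ?_⟩
  · rw [show 2 * (2 * M + (f + (2 * s + 1) * e)) + 2 * f =
      2 * (2 * M) + 2 * (2 * f + (2 * s + 1) * e) by ring]
    exact (isHomogeneous_normSqForm_pow _).mul (hR i j)
  · simp only [residualForm, mul_pow, ← pow_mul', smul_sub, smul_smul, ← pow_add, mul_sum,
      mul_assoc, sub_add_cancel]

end FinitelyManyConstraints

/-! ### Integrated constraints -/

section IntegratedConstraints

variable {n m : ℕ}

theorem isHomogeneousX_iff {k : ℕ} {q : MvPolynomial (Fin n ⊕ Fin m) ℝ} :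
    IsHomogeneousX q k ↔
      IsWeightedHomogeneous (Sum.elim (fun _ ↦ 1) (fun _ ↦ 0) : Fin n ⊕ Fin m → ℕ) q k := by
  refine forall_congr' fun d ↦ ?_
  rw [mem_support_iff, Finsupp.weight_apply, Finsupp.sum_fintype _ _ (by simp),
    Fintype.sum_sum_type]
  simp

theorem isHomogeneousX_zero (k : ℕ) :
    IsHomogeneousX (0 : MvPolynomial (Fin n ⊕ Fin m) ℝ) k :=
  isHomogeneousX_iff.2 (isWeightedHomogeneous_zero ℝ _ k)

namespace IsHomogeneousX

protected theorem mul {k l : ℕ} {p q : MvPolynomial (Fin n ⊕ Fin m) ℝ}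
    (hp : IsHomogeneousX p k) (hq : IsHomogeneousX q l) : IsHomogeneousX (p * q) (k + l) :=
  isHomogeneousX_iff.2 ((isHomogeneousX_iff.1 hp).mul (isHomogeneousX_iff.1 hq))

protected theorem sum {k : ℕ} {κ : Type*} {s : Finset κ}
    {p : κ → MvPolynomial (Fin n ⊕ Fin m) ℝ} (hp : ∀ i ∈ s, IsHomogeneousX (p i) k) :
    IsHomogeneousX (∑ i ∈ s, p i) k :=
  isHomogeneousX_iff.2 (.sum s p k fun i hi ↦ isHomogeneousX_iff.1 (hp i hi))

protected theorem integY {k : ℕ} {q : MvPolynomial (Fin n ⊕ Fin m) ℝ}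
    (hq : IsHomogeneousX q k) (ν : Measure (Fin m → ℝ)) : (integY ν q).IsHomogeneous k := by
  refine .sum _ _ _ fun d hd ↦ isHomogeneous_monomial _ ?_
  rw [Finsupp.degree_eq_sum, ← hq d hd]
  simp only [xPart, Finsupp.comapDomain_apply]

end IsHomogeneousX

theorem isHomogeneousX_rename_inl {k : ℕ} {p : MvPolynomial (Fin n) ℝ}
    (hp : p.IsHomogeneous k) :
    IsHomogeneousX (rename Sum.inl p : MvPolynomial (Fin n ⊕ Fin m) ℝ) k := by
  intro d hd
  obtain ⟨u, rfl, hu⟩ := coeff_rename_ne_zero _ _ _ (mem_support_iff.1 hd)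
  simp only [Finsupp.mapDomain_apply Sum.inl_injective]
  rw [hp.degree_eq_sum_deg_support (mem_support_iff.2 hu), ← Finsupp.degree_apply,
    Finsupp.degree_eq_sum]

theorem isHomogeneousX_rename_inr (p : MvPolynomial (Fin m) ℝ) :
    IsHomogeneousX (rename Sum.inr p : MvPolynomial (Fin n ⊕ Fin m) ℝ) 0 := by
  intro d hd
  obtain ⟨u, rfl, -⟩ := coeff_rename_ne_zero _ _ _ (mem_support_iff.1 hd)
  exact sum_eq_zero fun i _ ↦ Finsupp.mapDomain_of_notMem_range _ _ (by simp)

/-- Substitution of real values for the `x`-variables. -/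
noncomputable def specX (x : Fin n → ℝ) :
    MvPolynomial (Fin n ⊕ Fin m) ℝ →ₐ[ℝ] MvPolynomial (Fin m) ℝ :=
  aeval (Sum.elim (fun i ↦ C (x i)) X)

theorem eval_specX (x : Fin n → ℝ) (y : Fin m → ℝ) (q : MvPolynomial (Fin n ⊕ Fin m) ℝ) :
    eval y (specX x q) = eval (Sum.elim x y) q := by
  have h : (aeval y).comp (specX x) = aeval (R := ℝ) (Sum.elim x y) := by
    ext (i | j) <;> simp [specX]
  exact DFunLike.congr_fun h q

variable {ν : Measure (Fin m → ℝ)}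

section

variable (hmom : momentsFinite ν)

include hmom

theorem momentsFinite.integrable_eval_sumElim (x : Fin n → ℝ)
    (q : MvPolynomial (Fin n ⊕ Fin m) ℝ) : Integrable (fun y ↦ eval (Sum.elim x y) q) ν := by
  simpa only [eval_specX] using hmom.integrable_eval (specX x q)

theorem eval_integY (x : Fin n → ℝ) (q : MvPolynomial (Fin n ⊕ Fin m) ℝ) :
    eval x (integY ν q) = ∫ y, eval (Sum.elim x y) q ∂ν := by
  have hq (y : Fin m → ℝ) : eval (Sum.elim x y) q = ∑ d ∈ q.support,
      (q.coeff d * ∏ i, x i ^ d (Sum.inl i)) * ∏ j, y j ^ d (Sum.inr j) := by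
    simp only [eval_eq', Fintype.prod_sum_type, Sum.elim_inl, Sum.elim_inr, mul_assoc]
  have hint (d : Fin n ⊕ Fin m →₀ ℕ) : Integrable (fun y ↦ ∏ j, y j ^ d (Sum.inr j)) ν := by
    simpa using hmom.integrable_eval (∏ j, X j ^ d (Sum.inr j))
  simp only [hq]
  rw [integral_finsetSum _ fun d _ ↦ (hint d).const_mul _, integY, eval_sum]
  refine sum_congr rfl fun d _ ↦ ?_
  rw [integral_const_mul, eval_monomial, Finsupp.prod_fintype _ _ fun i ↦ pow_zero _]
  simp only [xPart, Finsupp.comapDomain_apply]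
  ring

theorem integY_sum {κ : Type*} (s : Finset κ) (q : κ → MvPolynomial (Fin n ⊕ Fin m) ℝ) :
    integY ν (∑ k ∈ s, q k) = ∑ k ∈ s, integY ν (q k) := by
  refine MvPolynomial.funext fun x ↦ ?_
  simp only [eval_sum, eval_integY hmom]
  exact integral_finsetSum _ fun k _ ↦ hmom.integrable_eval_sumElim x (q k)

theorem integY_rename_inl_mul (p : MvPolynomial (Fin n) ℝ)
    (q : MvPolynomial (Fin n ⊕ Fin m) ℝ) :
    integY ν (rename Sum.inl p * q) = p * integY ν q := by
  refine MvPolynomial.funext fun x ↦ ?_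
  simp only [map_mul, eval_integY hmom, eval_rename, Sum.elim_comp_inl, integral_const_mul]

end

variable {τ : Type*} [Fintype τ] (G : Matrix τ τ (MvPolynomial (Fin n ⊕ Fin m) ℝ))

/-- The polynomial `∫ u(y)ᵀ G(x, y) u(y) dν(y)` in `x`. -/
noncomputable def integForm (ν : Measure (Fin m → ℝ)) (u : τ → MvPolynomial (Fin m) ℝ) :
    MvPolynomial (Fin n) ℝ :=
  integY ν ((rename Sum.inr ∘ u) ⬝ᵥ G *ᵥ (rename Sum.inr ∘ u))

variable {G}

theorem isHomogeneous_integForm {d : ℕ} (hG : ∀ a b, IsHomogeneousX (G a b) d)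
    (u : τ → MvPolynomial (Fin m) ℝ) : (integForm G ν u).IsHomogeneous d := by
  refine IsHomogeneousX.integY (.sum fun a _ ↦ ?_) ν
  rw [← zero_add d]
  refine (isHomogeneousX_rename_inr (u a)).mul (.sum fun b _ ↦ ?_)
  exact (hG a b).mul (isHomogeneousX_rename_inr (u b))

theorem eval_integForm (hmom : momentsFinite ν) (x : Fin n → ℝ)
    (u : τ → MvPolynomial (Fin m) ℝ) :
    eval x (integForm G ν u) =
      ∫ y, (eval y ∘ u) ⬝ᵥ evalMat (Sum.elim x y) G *ᵥ (eval y ∘ u) ∂ν := by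
  have hu (y : Fin m → ℝ) : eval (Sum.elim x y) ∘ rename Sum.inr ∘ u = eval y ∘ u := by
    ext a
    simp [eval_rename]
  have hmulVec (y : Fin m → ℝ) : eval (Sum.elim x y) ∘ (G *ᵥ (rename Sum.inr ∘ u)) =
      evalMat (Sum.elim x y) G *ᵥ (eval y ∘ u) := by
    rw [← hu y]
    exact funext fun a ↦ RingHom.map_mulVec _ _ _ _
  rw [integForm, eval_integY hmom]
  simp only [RingHom.map_dotProduct, hu, hmulVec]

theorem eval_integForm_smul (hmom : momentsFinite ν) (x : Fin n → ℝ) (r : ℝ)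
    (u : τ → MvPolynomial (Fin m) ℝ) :
    eval x (integForm G ν (r • u)) = r ^ 2 * eval x (integForm G ν u) := by
  have hr (y : Fin m → ℝ) : eval y ∘ (r • u) = r • (eval y ∘ u) := by
    ext a
    simp [smul_eval]
  simp only [eval_integForm hmom, hr, mulVec_smul, smul_dotProduct, dotProduct_smul,
    smul_eq_mul, integral_const_mul]
  ring

theorem exists_eval_integForm_neg (hcar : Carleman ν) (hmom : momentsFinite ν) (hGs : G.IsSymm)
    {x : Fin n → ℝ} {y : Fin m → ℝ} (hy : y ∈ ν.support)
    (hGy : ¬ (evalMat (Sum.elim x y) G).PosSemidef) :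
    ∃ u : τ → MvPolynomial (Fin m) ℝ, eval x (integForm G ν u) < 0 := by
  obtain ⟨v, hv⟩ : ∃ v : τ → ℝ, v ⬝ᵥ evalMat (Sum.elim x y) G *ᵥ v < 0 := by
    by_contra! hnonneg
    exact hGy (.of_dotProduct_mulVec_nonneg (isHermitian_iff_isSymm.2 (hGs.map _)) hnonneg)
  let g : MvPolynomial (Fin m) ℝ := specX x ((C ∘ v) ⬝ᵥ G *ᵥ (C ∘ v))
  have hg (z : Fin m → ℝ) : eval z g = v ⬝ᵥ evalMat (Sum.elim x z) G *ᵥ v := by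
    have hC : eval (Sum.elim x z) ∘ C ∘ v = v := funext fun a ↦ eval_C _
    have hmulVec : eval (Sum.elim x z) ∘ (G *ᵥ (C ∘ v)) = evalMat (Sum.elim x z) G *ᵥ v := by
      conv_rhs => rw [← hC]
      exact funext fun a ↦ RingHom.map_mulVec _ _ _ _
    rw [eval_specX, RingHom.map_dotProduct, hC, hmulVec]
  obtain ⟨h, hh⟩ := hcar.exists_integral_sq_mul_neg hmom g hy (by rwa [hg])
  refine ⟨fun a ↦ v a • h, ?_⟩
  have hu (z : Fin m → ℝ) : eval z ∘ (fun a ↦ v a • h) = eval z h • v := by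
    ext a
    simp [smul_eval, mul_comm]
  rw [eval_integForm hmom]
  simpa only [hu, mulVec_smul, smul_dotProduct, dotProduct_smul, smul_eq_mul, ← mul_assoc, ← sq,
    ← hg] using hh

theorem exists_abs_eval_integForm_le_one_of_neg (hmom : momentsFinite ν) {x : Fin n → ℝ}
    {u : τ → MvPolynomial (Fin m) ℝ} (hu : eval x (integForm G ν u) < 0) :
    ∃ u' : τ → MvPolynomial (Fin m) ℝ,
      (∀ z ∈ euclideanSphere (Fin n), |eval z (integForm G ν u')| ≤ 1) ∧
      eval x (integForm G ν u') < 0 := by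
  obtain ⟨B, hB⟩ := isCompact_euclideanSphere.exists_bound_of_continuousOn
    (MvPolynomial.continuous_eval (integForm G ν u)).continuousOn
  refine ⟨(1 + |B|)⁻¹ • u, fun z hz ↦ ?_, ?_⟩
  · rw [eval_integForm_smul hmom, abs_mul, abs_of_nonneg (sq_nonneg _), inv_pow,
      inv_mul_le_iff₀ (by positivity)]
    have hz_le : |eval z (integForm G ν u)| ≤ |B| := (hB z hz).trans (le_abs_self B)
    nlinarith [abs_nonneg B]
  · rw [eval_integForm_smul hmom]
    exact mul_neg_of_pos_of_neg (by positivity) hu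

theorem exists_finset_eval_integForm_neg (hcar : Carleman ν) (hmom : momentsFinite ν)
    (hGs : G.IsSymm) {K : Set (Fin n → ℝ)} (hK : IsCompact K)
    (hneg : ∀ x ∈ K, ∃ y ∈ ν.support, ¬ (evalMat (Sum.elim x y) G).PosSemidef) :
    ∃ t : Finset (τ → MvPolynomial (Fin m) ℝ),
      (∀ u ∈ t, ∀ x ∈ euclideanSphere (Fin n), |eval x (integForm G ν u)| ≤ 1) ∧
      ∀ x ∈ K, ∃ u ∈ t, eval x (integForm G ν u) < 0 := by
  let T : Set (τ → MvPolynomial (Fin m) ℝ) :=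
    {u | ∀ x ∈ euclideanSphere (Fin n), |eval x (integForm G ν u)| ≤ 1}
  have hcover : K ⊆ ⋃ u ∈ T, {x | eval x (integForm G ν u) < 0} := fun x hx ↦ by
    obtain ⟨y, hy, hGy⟩ := hneg x hx
    obtain ⟨u, hu⟩ := exists_eval_integForm_neg hcar hmom hGs hy hGy
    obtain ⟨u', hu'T, hu'⟩ := exists_abs_eval_integForm_le_one_of_neg hmom hu
    exact Set.mem_biUnion hu'T hu'
  obtain ⟨t, htT, ht, hKt⟩ := hK.elim_finite_subcover_image
    (fun u _ ↦ isOpen_lt (MvPolynomial.continuous_eval _) continuous_const) hcover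
  refine ⟨ht.toFinset, fun u hu ↦ htT (ht.mem_toFinset.1 hu), fun x hx ↦ ?_⟩
  obtain ⟨u, hu, hux⟩ := Set.mem_iUnion₂.1 (hKt hx)
  exact ⟨u, ht.mem_toFinset.2 hu, hux⟩

end IntegratedConstraints

section WeightMatrix

open scoped Kronecker

variable {ι τ : Type*} [DecidableEq ι]

theorem isSOSMatrix_one_kronecker_vecMulVec {σ : Type*} [Fintype ι] [Fintype τ]
    (w : τ → MvPolynomial σ ℝ) :
    IsSOSMatrix ((1 : Matrix ι ι (MvPolynomial σ ℝ)) ⊗ₖ vecMulVec w w) := by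
  have h := isSOSMatrix_transpose_mul_self
    ((1 : Matrix ι ι (MvPolynomial σ ℝ)) ⊗ₖ replicateRow Unit w)
  rwa [← kroneckerMap_transpose, ← mul_kronecker_mul, transpose_one, one_mul,
    transpose_replicateRow, ← vecMulVec_eq] at h

theorem lram_sum_one_kronecker_vecMulVec {R κ : Type*} [CommSemiring R] [Fintype τ]
    (s : Finset κ) (w : κ → τ → R) (B : Matrix τ τ R) :
    lram (∑ k ∈ s, (1 : Matrix ι ι R) ⊗ₖ vecMulVec (w k) (w k)) B =
      (∑ k ∈ s, w k ⬝ᵥ Bᵀ *ᵥ w k) • 1 := by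
  ext1 i j
  simp only [lram, of_apply, Matrix.sum_apply, kroneckerMap_apply, vecMulVec_apply, one_apply,
    Matrix.smul_apply, smul_eq_mul, eq_comm (a := j)]
  split_ifs
  · simp only [one_mul, mul_one, sum_mul, dotProduct, mulVec, mul_sum, transpose_apply]
    rw [sum_congr rfl fun a _ ↦ sum_comm, sum_comm]
    refine sum_congr rfl fun k _ ↦ sum_congr rfl fun a _ ↦ sum_congr rfl fun c _ ↦ ?_
    ring
  · simp only [zero_mul, sum_const_zero, mul_zero]

variable {n m : ℕ} {κ : Type*} [Fintype κ]

/-- The vector `p(x) u(y)` of polynomials in `(x, y)`. -/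
noncomputable def weightVector (p : MvPolynomial (Fin n) ℝ) (u : τ → MvPolynomial (Fin m) ℝ) :
    τ → MvPolynomial (Fin n ⊕ Fin m) ℝ :=
  (rename Sum.inl p : MvPolynomial (Fin n ⊕ Fin m) ℝ) • (rename Sum.inr ∘ u)

/-- The weight `∑ₖ p_k(x)² (I ⊗ u_k(y) u_k(y)ᵀ)`, which pairs with `G` to the scalar matrix
`∑ₖ p_k(x)² u_k(y)ᵀ G(x, y) u_k(y)`. -/
noncomputable def weightMatrix (ι : Type*) [DecidableEq ι] (p : κ → MvPolynomial (Fin n) ℝ)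
    (u : κ → τ → MvPolynomial (Fin m) ℝ) :
    Matrix (ι × τ) (ι × τ) (MvPolynomial (Fin n ⊕ Fin m) ℝ) :=
  ∑ k, 1 ⊗ₖ vecMulVec (weightVector (p k) (u k)) (weightVector (p k) (u k))

theorem isSOSMatrix_weightMatrix [Fintype ι] [Fintype τ] (p : κ → MvPolynomial (Fin n) ℝ)
    (u : κ → τ → MvPolynomial (Fin m) ℝ) : IsSOSMatrix (weightMatrix ι p u) :=
  IsSOSMatrix.sum fun _ _ ↦ isSOSMatrix_one_kronecker_vecMulVec _

theorem isHomogeneousX_weightMatrix {d : ℕ} {p : κ → MvPolynomial (Fin n) ℝ}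
    (hp : ∀ k, (p k).IsHomogeneous d) (u : κ → τ → MvPolynomial (Fin m) ℝ) (a b : ι × τ) :
    IsHomogeneousX (weightMatrix ι p u a b) (2 * d) := by
  rw [weightMatrix, Matrix.sum_apply, two_mul]
  refine .sum fun k _ ↦ ?_
  have hw (c : τ) : IsHomogeneousX (weightVector (p k) (u k) c) d :=
    (isHomogeneousX_rename_inl (hp k)).mul (isHomogeneousX_rename_inr (u k c))
  rw [kroneckerMap_apply, one_apply]
  split_ifs
  · rw [one_mul]
    exact (hw a.2).mul (hw b.2)
  · rw [zero_mul]
    exact isHomogeneousX_zero _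

theorem map_integY_lram_weightMatrix [Fintype τ] {ν : Measure (Fin m → ℝ)} (hmom : momentsFinite ν)
    {G : Matrix τ τ (MvPolynomial (Fin n ⊕ Fin m) ℝ)} (hGs : G.IsSymm)
    (p : κ → MvPolynomial (Fin n) ℝ) (u : κ → τ → MvPolynomial (Fin m) ℝ) :
    (lram (weightMatrix ι p u) G).map (integY ν) =
      (∑ k, p k ^ 2 * integForm G ν (u k)) • 1 := by
  have hsum : integY ν (∑ k, weightVector (p k) (u k) ⬝ᵥ G *ᵥ weightVector (p k) (u k)) =
      ∑ k, p k ^ 2 * integForm G ν (u k) := by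
    simp only [weightVector, mulVec_smul, smul_dotProduct, dotProduct_smul, smul_eq_mul, sq,
      mul_assoc, integY_sum hmom, integY_rename_inl_mul hmom, integForm]
  rw [weightMatrix, lram_sum_one_kronecker_vecMulVec, hGs.eq, smul_one_eq_diagonal,
    diagonal_map (by simp [integY]), hsum, smul_one_eq_diagonal]

end WeightMatrix

theorem hasSupport.subset_support {m : ℕ} {ν : Measure (Fin m → ℝ)} {Y : Set (Fin m → ℝ)}
    (hsupp : hasSupport ν Y) : Y ⊆ ν.support := fun y hy ↦ by
  refine (Measure.mem_support_iff_forall y).2 fun U hU ↦ ?_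
  obtain ⟨V, hVU, hV, hyV⟩ := mem_nhds_iff.1 hU
  exact (hsupp.2 V hV ⟨y, hyV, hy⟩).trans_le (measure_mono hVU)

/-- homogeneous Putinar–Vasilescu-type Positivstellensatz with
universal quantifiers (Theorem C). -/
theorem homogeneous_positivstellensatz {n m p q : ℕ}
    (Y : Set (Fin m → ℝ)) (hY : IsClosed Y)
    (ν : Measure (Fin m → ℝ)) (hsupp : hasSupport ν Y) (hmom : momentsFinite ν)
    (hcar : Carleman ν)
    (F : Matrix (Fin p) (Fin p) (MvPolynomial (Fin n) ℝ)) (hFs : F.IsSymm)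
    (G : Matrix (Fin q) (Fin q) (MvPolynomial (Fin n ⊕ Fin m) ℝ)) (hGs : G.IsSymm)
    (dF dG : ℕ) (hdF : Even dF) (hdG : Even dG)
    (hF : ∀ i j, (F i j).IsHomogeneous dF)
    (hG : ∀ i j, IsHomogeneousX (G i j) dG)
    (hpd : ∀ x : Fin n → ℝ, x ≠ 0 →
      (∀ y ∈ Y, (evalMat (Sum.elim x y) G).PosSemidef) → (evalMat x F).PosDef) :
    ∃ (N : ℕ) (S0 : Matrix (Fin p) (Fin p) (MvPolynomial (Fin n) ℝ))
      (Sg : Matrix (Fin p × Fin q) (Fin p × Fin q) (MvPolynomial (Fin n ⊕ Fin m) ℝ)),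
      IsSOSMatrix S0 ∧ IsSOSMatrix Sg ∧
      (∀ i j, (S0 i j).IsHomogeneous (2 * N + dF)) ∧
      (∀ a b, IsHomogeneousX (Sg a b) (2 * N + dF - dG)) ∧
      ((∑ i, (X i : MvPolynomial (Fin n) ℝ) ^ 2) ^ N) • F =
        S0 + (lram Sg G).map (integY ν) := by
  obtain ⟨f, rfl⟩ := hdF.two_dvd
  obtain ⟨e, rfl⟩ := hdG.two_dvd
  have hK : IsCompact {x ∈ euclideanSphere (Fin n) | ¬ (evalMat x F).PosDef} :=
    isCompact_euclideanSphere.inter_right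
      (isOpen_setOf_posDef (continuous_evalMat F) fun x ↦ hFs.map _).isClosed_compl
  obtain ⟨t, htle, htneg⟩ := exists_finset_eval_integForm_neg hcar hmom hGs hK fun x hx ↦ by
    by_contra! hx_mem
    exact hx.2 (hpd x (ne_zero_of_mem_euclideanSphere hx.1)
      fun y hy ↦ hx_mem y (hsupp.subset_support hy))
  obtain ⟨N, D, S, w, hdeg, hS, hShom, hwhom, hid⟩ := exists_normSqForm_pow_smul_eq_add
    (g := fun u : t ↦ integForm G ν u) hFs hF (fun u ↦ isHomogeneous_integForm hG u)
    (fun u ↦ htle u u.2) fun x hx hall ↦ by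
      by_contra hnot
      obtain ⟨u, hu, hneg⟩ := htneg x ⟨hx, hnot⟩
      exact (hall ⟨u, hu⟩).not_gt hneg
  refine ⟨N, S, weightMatrix (Fin p) w (fun u : t ↦ (u : Fin q → MvPolynomial (Fin m) ℝ)), hS,
    isSOSMatrix_weightMatrix _ _, hShom, fun a b ↦ ?_, ?_⟩
  · rw [hdeg, Nat.add_sub_cancel]
    exact isHomogeneousX_weightMatrix hwhom _ a b
  · rw [map_integY_lram_weightMatrix hmom hGs, hid]
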